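/- Let 2 < p ≤ 3. Assume condition (LD3) holds and max(|N(C_i)|, |{j ∈ 𝒥 : i ∈ C_j}|) ≤ κ for every i ∈ 𝒥, where N(C_i) = {j ∈ 𝒥 : C_i ∩ B_j ≠ ∅}. Then sup_{z∈ℝ} |F(z) − Φ(z)| ≤ 75 κ^{p−1} Σ_{i∈𝒥} E|X_i|^p. -/

import Mathlib

open MeasureTheory ProbabilityTheory Real

noncomputable def stdGaussianCDF : ℝ → ℝ :=
  fun z => ∫ x in Set.Iic z, (Real.sqrt (2 * Real.pi))⁻¹ * Real.exp (-x ^ 2 / 2)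

set_option linter.unusedSectionVars false


/-! ### Ramp, bump and kernel functions -/

noncomputable def ramp (α z w : ℝ) : ℝ := max 0 (min 1 ((w - z) / α))

lemma ramp_nonneg (α z w : ℝ) : 0 ≤ ramp α z w := le_max_left _ _

lemma ramp_le_one (α z w : ℝ) : ramp α z w ≤ 1 := max_le zero_le_one (min_le_left _ _)

lemma ramp_mono {α : ℝ} (hα : 0 < α) (z : ℝ) {w w' : ℝ} (h : w ≤ w') :
    ramp α z w ≤ ramp α z w' := by
  unfold ramp; gcongr

lemma ramp_cont (α z : ℝ) : Continuous (ramp α z) := by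
  unfold ramp; fun_prop

lemma ramp_zero {α : ℝ} (hα : 0 < α) {z w : ℝ} (h : w ≤ z) : ramp α z w = 0 := by
  unfold ramp
  apply max_eq_left
  refine (min_le_right _ _).trans ?_
  exact div_nonpos_of_nonpos_of_nonneg (by linarith) hα.le

lemma ramp_one {α : ℝ} (hα : 0 < α) {z w : ℝ} (h : z + α ≤ w) : ramp α z w = 1 := by
  unfold ramp
  have : 1 ≤ (w - z) / α := by rw [le_div_iff₀ hα]; linarith
  rw [min_eq_left this]; simp

lemma ramp_shift {α : ℝ} (hα : 0 < α) (z a : ℝ) {w : ℝ} (ha : 0 ≤ a) :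
    ramp α (z + a) w ≤ ramp α z w := by
  unfold ramp; gcongr; linarith

lemma ramp_sub_le {α : ℝ} (hα : 0 < α) (z w r : ℝ) (h0 : 0 ≤ r) (h1 : r ≤ 1) :
    ramp α z (w + r) - ramp α z (w - r) ≤
      (1 / α) * ∫ u in Set.Icc (-1 : ℝ) 1, (Set.Icc (-r) r).indicator 1 u *
        (Set.Icc z (z + α)).indicator 1 (w + u) := by
  have e1 : (fun u : ℝ => (Set.Icc (-r) r).indicator (1 : ℝ → ℝ) u *
        (Set.Icc z (z + α)).indicator (1 : ℝ → ℝ) (w + u)) =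
      (Set.Icc (max (-r) (z - w)) (min r (z + α - w))).indicator (1 : ℝ → ℝ) := by
    ext u
    simp only [Set.indicator, Set.mem_Icc, max_le_iff, le_min_iff, Pi.one_apply]
    by_cases hA : -r ≤ u ∧ u ≤ r <;> by_cases hB : z ≤ w + u ∧ w + u ≤ z + α
    · rw [if_pos hA, if_pos hB, if_pos ⟨⟨hA.1, by linarith⟩, hA.2, by linarith⟩]; norm_num
    · rw [if_pos hA, if_neg hB, if_neg]; · norm_num
      rintro ⟨⟨_, _⟩, _, _⟩; apply hB; constructor <;> linarith
    · rw [if_neg hA, zero_mul, if_neg (fun hc => hA ⟨hc.1.1, hc.2.1⟩)]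
    · rw [if_neg hA, zero_mul, if_neg (fun hc => hA ⟨hc.1.1, hc.2.1⟩)]
  rw [e1, integral_indicator_one measurableSet_Icc]
  rw [measureReal_restrict_apply measurableSet_Icc, Set.inter_eq_left.mpr, Real.volume_real_Icc]
  · rw [div_mul_eq_mul_div, one_mul, le_div_iff₀ hα]
    have key : ∀ v, ramp α z v * α = max 0 (min α (v - z)) := by
      intro v; unfold ramp
      rw [max_mul_of_nonneg _ _ hα.le, min_mul_of_nonneg _ _ hα.le]
      congr 1
      · simp
      · congr 1
        · simp
        · field_simp
    rw [sub_mul, key, key]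
    rcases max_cases 0 (min α (w + r - z)) with h | h <;>
    rcases max_cases 0 (min α (w - r - z)) with h' | h' <;>
    rcases min_cases α (w + r - z) with g | g <;>
    rcases min_cases α (w - r - z) with g' | g' <;>
    rcases max_cases (-r) (z - w) with k | k <;>
    rcases min_cases r (z + α - w) with k' | k' <;>
    rcases max_cases (min r (z + α - w) - max (-r) (z - w)) 0 with j | j <;> linarith
  · intro u hu
    simp only [Set.mem_Icc, max_le_iff, le_min_iff] at hu ⊢
    constructor <;> linarith [hu.1.1, hu.2.1]

lemma ramp_abs_sub {α : ℝ} (hα : 0 < α) (z w t : ℝ) :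
    |ramp α z (w + t) - ramp α z w| ≤ ramp α z (w + |t|) - ramp α z (w - |t|) := by
  have a1 := ramp_mono hα z (w := w + t) (w' := w + |t|) (by linarith [le_abs_self t])
  have a2 := ramp_mono hα z (w := w) (w' := w + |t|) (by linarith [abs_nonneg t])
  have a3 := ramp_mono hα z (w := w - |t|) (w' := w + t) (by linarith [neg_abs_le t])
  have a4 := ramp_mono hα z (w := w - |t|) (w' := w) (by linarith [abs_nonneg t])
  rw [abs_le]; constructor <;> linarith

noncomputable def bump (α x w : ℝ) : ℝ := ramp α (x - α) w - ramp α (x + α) w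

lemma bump_nonneg {α : ℝ} (hα : 0 < α) (x w : ℝ) : 0 ≤ bump α x w := by
  unfold bump
  have := ramp_shift hα (x - α) (2 * α) (w := w) (by linarith)
  rw [show x - α + 2 * α = x + α by ring] at this
  linarith

lemma bump_le_one (α x w : ℝ) : bump α x w ≤ 1 := by
  unfold bump
  linarith [ramp_le_one α (x - α) w, ramp_nonneg α (x + α) w]

lemma bump_cont (α x : ℝ) : Continuous (bump α x) := by
  unfold bump; exact (ramp_cont _ _).sub (ramp_cont _ _)

lemma bump_ge {α : ℝ} (hα : 0 < α) (x w : ℝ) :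
    (Set.Icc x (x + α)).indicator 1 w ≤ bump α x w := by
  by_cases h : w ∈ Set.Icc x (x + α)
  · rw [Set.indicator_of_mem h]
    unfold bump
    rw [ramp_one hα (by linarith [h.1]), ramp_zero hα h.2]; simp
  · rw [Set.indicator_of_notMem h]; exact bump_nonneg hα x w

lemma bump_le {α : ℝ} (hα : 0 < α) (x w : ℝ) :
    bump α x w ≤ (Set.Icc (x - α) (x + 2 * α)).indicator 1 w := by
  by_cases h : w ∈ Set.Icc (x - α) (x + 2 * α)
  · rw [Set.indicator_of_mem h]; exact bump_le_one _ _ _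
  · rw [Set.indicator_of_notMem h]
    simp only [Set.mem_Icc, not_and_or, not_le] at h
    unfold bump
    rcases h with h | h
    · rw [ramp_zero hα h.le, ramp_zero hα (by linarith)]; simp
    · rw [ramp_one hα (by linarith), ramp_one hα (by linarith)]; simp

lemma bump_sq_int {α : ℝ} (hα : 0 < α) (x w : ℝ) :
    ∫ t in Set.Icc (-1 : ℝ) 1, (bump α x (w + t)) ^ 2 ≤ 3 * α := by
  have h1 : ∀ t, (bump α x (w + t)) ^ 2 ≤
      (Set.Icc (x - α - w) (x + 2 * α - w)).indicator (1 : ℝ → ℝ) t := by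
    intro t
    have a := bump_le hα x (w + t)
    have b := bump_nonneg hα x (w + t)
    have c := bump_le_one α x (w + t)
    have : (Set.Icc (x - α - w) (x + 2 * α - w)).indicator (1 : ℝ → ℝ) t =
      (Set.Icc (x - α) (x + 2 * α)).indicator 1 (w + t) := by
      simp only [Set.indicator, Set.mem_Icc]
      congr 1
      exact propext ⟨fun h => ⟨by linarith [h.1], by linarith [h.2]⟩,
        fun h => ⟨by linarith [h.1], by linarith [h.2]⟩⟩
    rw [this]; nlinarith
  calc _ ≤ ∫ t in Set.Icc (-1 : ℝ) 1,
        (Set.Icc (x - α - w) (x + 2 * α - w)).indicator (1 : ℝ → ℝ) t := by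
        apply integral_mono_of_nonneg
        · exact Filter.Eventually.of_forall fun t => sq_nonneg _
        · exact (integrable_const (1 : ℝ)).indicator measurableSet_Icc
        · exact Filter.Eventually.of_forall h1
    _ ≤ 3 * α := by
        rw [integral_indicator_one measurableSet_Icc, measureReal_restrict_apply measurableSet_Icc]
        refine (measureReal_mono Set.inter_subset_left (by simp)).trans ?_
        rw [Real.volume_real_Icc_of_le (by linarith)]; linarith

noncomputable def bumpF (α x w : ℝ) : ℝ := ∫ t in x..w, bump α x t

lemma bumpF_sub (α x a b : ℝ) : bumpF α x b - bumpF α x a = ∫ t in a..b, bump α x t := by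
  unfold bumpF
  exact intervalIntegral.integral_interval_sub_left
    ((bump_cont α x).intervalIntegrable _ _) ((bump_cont α x).intervalIntegrable _ _)

lemma bumpF_lip {α : ℝ} (hα : 0 < α) (x a b : ℝ) : |bumpF α x b - bumpF α x a| ≤ |b - a| := by
  rw [bumpF_sub]
  have := intervalIntegral.norm_integral_le_of_norm_le_const (a := a) (b := b) (C := 1)
    (f := bump α x) (fun t _ => by
      rw [Real.norm_eq_abs, abs_of_nonneg (bump_nonneg hα x t)]; exact bump_le_one _ _ _)
  simpa using this

lemma bumpF_cont (α x : ℝ) : Continuous (bumpF α x) := by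
  unfold bumpF
  exact intervalIntegral.continuous_primitive
    (fun a b => (bump_cont α x).intervalIntegrable _ _) x

lemma bumpF_bound {α : ℝ} (hα : 0 < α) (x w : ℝ) : |bumpF α x w| ≤ 2 * α := by
  have hx : bumpF α x x = 0 := by simp [bumpF]
  have zz : ∀ a b, (∀ t ∈ Set.uIcc a b, t ∉ Set.Ioo (x - α) (x + 2 * α)) →
      bumpF α x b - bumpF α x a = 0 := by
    intro a b h
    rw [bumpF_sub]
    rw [intervalIntegral.integral_congr (g := fun _ => 0), intervalIntegral.integral_zero]
    intro t ht
    have := h t ht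
    simp only [Set.mem_Ioo, not_and_or, not_lt] at this
    unfold bump
    rcases this with h | h
    · simp only; rw [ramp_zero hα h, ramp_zero hα (by linarith)]; simp
    · simp only; rw [ramp_one hα (by linarith), ramp_one hα (by linarith)]; simp
  rcases le_total w (x - α) with h | h
  · have a := zz (x - α) w (by
      intro t ht; rw [Set.uIcc_of_ge h] at ht
      simp only [Set.mem_Ioo, not_and_or, not_lt]; left; exact ht.2)
    have b := bumpF_lip hα x x (x - α)
    rw [show bumpF α x w = bumpF α x (x - α) - bumpF α x x by linarith]
    refine b.trans ?_
    rw [show x - α - x = -α by ring, abs_neg, abs_of_pos hα]; linarith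
  · rcases le_total w (x + 2 * α) with h' | h'
    · have b := bumpF_lip hα x x w
      rw [hx, sub_zero] at b
      refine b.trans ?_
      rw [abs_le]; constructor <;> linarith
    · have a := zz (x + 2 * α) w (by
        intro t ht; rw [Set.uIcc_of_le h'] at ht
        simp only [Set.mem_Ioo, not_and_or, not_lt]; right; exact ht.1)
      have b := bumpF_lip hα x x (x + 2 * α)
      rw [show bumpF α x w = bumpF α x (x + 2 * α) - bumpF α x x by linarith]
      refine b.trans ?_
      rw [show x + 2 * α - x = 2 * α by ring, abs_of_pos (by linarith)]

noncomputable def ker (y t : ℝ) : ℝ :=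
  (Set.Ioc (-y) 0).indicator 1 t - (Set.Ioc 0 (-y)).indicator 1 t

lemma ker_meas : Measurable (fun q : ℝ × ℝ => ker q.1 q.2) := by
  have h1 : MeasurableSet {q : ℝ × ℝ | -q.1 < q.2 ∧ q.2 ≤ 0} := by
    apply MeasurableSet.inter
    · exact measurableSet_lt (f := fun q : ℝ × ℝ => -q.1) (g := fun q => q.2)
        (by fun_prop) (by fun_prop)
    · exact measurableSet_le (f := fun q : ℝ × ℝ => q.2) (g := fun q => 0)
        (by fun_prop) (by fun_prop)
  have h2 : MeasurableSet {q : ℝ × ℝ | 0 < q.2 ∧ q.2 ≤ -q.1} := by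
    apply MeasurableSet.inter
    · exact measurableSet_lt (f := fun q : ℝ × ℝ => 0) (g := fun q => q.2)
        (by fun_prop) (by fun_prop)
    · exact measurableSet_le (f := fun q : ℝ × ℝ => q.2) (g := fun q => -q.1)
        (by fun_prop) (by fun_prop)
  have e : (fun q : ℝ × ℝ => ker q.1 q.2) = fun q =>
      ({q : ℝ × ℝ | -q.1 < q.2 ∧ q.2 ≤ 0}.indicator (fun _ => (1 : ℝ)) q -
      {q : ℝ × ℝ | 0 < q.2 ∧ q.2 ≤ -q.1}.indicator (fun _ => (1 : ℝ)) q) := by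
    ext q; simp [ker, Set.indicator]
  rw [e]
  exact (measurable_const.indicator h1).sub (measurable_const.indicator h2)

lemma ker_cases (y t : ℝ) : (ker y t = 0 ∨ ker y t = 1 ∨ ker y t = -1) := by
  unfold ker
  by_cases h1 : t ∈ Set.Ioc (-y) 0 <;> by_cases h2 : t ∈ Set.Ioc 0 (-y)
  · exact absurd h1.2 (not_le.mpr h2.1)
  all_goals simp [h1, h2]

lemma ker_abs_le (y t : ℝ) : |ker y t| ≤ 1 := by
  rcases ker_cases y t with h | h | h <;> simp [h]

lemma ker_sq (y t : ℝ) : ker y t ^ 2 = |ker y t| := by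
  rcases ker_cases y t with h | h | h <;> simp [h]

lemma ker_supp (y t : ℝ) : |ker y t| * |t| ≤ |ker y t| * |y| := by
  unfold ker
  by_cases h1 : t ∈ Set.Ioc (-y) 0 <;> by_cases h2 : t ∈ Set.Ioc 0 (-y)
  · exact absurd h1.2 (not_le.mpr h2.1)
  · simp only [h1, h2, Set.indicator_of_mem, Set.indicator_of_notMem, not_false_eq_true]
    simp only [Pi.one_apply, sub_zero, abs_one, one_mul]
    have := h1.1
    rw [abs_of_nonpos h1.2]; linarith [le_abs_self y]
  · simp only [h1, h2, Set.indicator_of_mem, Set.indicator_of_notMem, not_false_eq_true]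
    simp only [Pi.one_apply, zero_sub, abs_neg, abs_one, one_mul]
    rw [abs_of_pos h2.1]; linarith [neg_abs_le y, h2.2]
  · simp [h1, h2]

lemma ker_int (y : ℝ) (hy : |y| ≤ 1) (g : ℝ → ℝ) (hg : Continuous g) :
    ∫ t in Set.Icc (-1 : ℝ) 1, g t * ker y t = ∫ t in (-y)..0, g t := by
  rw [abs_le] at hy
  have e : (fun t => g t * ker y t) = fun t => (Set.Ioc (-y) 0).indicator g t -
      (Set.Ioc 0 (-y)).indicator g t := by
    ext t; unfold ker
    rw [mul_sub]
    simp only [Set.indicator, Pi.one_apply]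
    split_ifs <;> simp
  have hI : IntegrableOn g (Set.Icc (-1) 1) := hg.integrableOn_Icc
  rw [e, integral_sub (hI.indicator measurableSet_Ioc) (hI.indicator measurableSet_Ioc),
    intervalIntegral, setIntegral_indicator measurableSet_Ioc,
    setIntegral_indicator measurableSet_Ioc, Set.inter_eq_right.mpr, Set.inter_eq_right.mpr]
  · intro t ht; exact ⟨by linarith [ht.1], by linarith [ht.2]⟩
  · intro t ht; exact ⟨by linarith [ht.1], by linarith [ht.2]⟩

lemma ker_abs_int (y : ℝ) (hy : |y| ≤ 1) :
    ∫ t in Set.Icc (-1 : ℝ) 1, |ker y t| = |y| := by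
  have e : ∀ t, |ker y t| = (if 0 ≤ y then 1 else -1) * ker y t := by
    intro t
    unfold ker
    by_cases h1 : t ∈ Set.Ioc (-y) 0 <;> by_cases h2 : t ∈ Set.Ioc 0 (-y)
    · exact absurd h1.2 (not_le.mpr h2.1)
    · rw [if_pos (by linarith [h1.1, h1.2])]; simp [h1, h2]
    · rw [if_neg (by linarith [h2.1, h2.2])]; simp [h1, h2]
    · simp [h1, h2]
  simp only [e]
  rw [ker_int y hy (fun _ => if 0 ≤ y then 1 else -1) continuous_const]
  rw [intervalIntegral.integral_const]
  split_ifs with h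
  · simp [abs_of_nonneg h]
  · simp [abs_of_neg (not_le.mp h)]

lemma ker_int_one (y : ℝ) (hy : |y| ≤ 1) :
    ∫ t in Set.Icc (-1 : ℝ) 1, ker y t = y := by
  have := ker_int y hy (fun _ => 1) continuous_const
  simpa using this

lemma ker_bump_int (y : ℝ) (hy : |y| ≤ 1) (α x w : ℝ) :
    ∫ t in Set.Icc (-1 : ℝ) 1, bump α x (w + t) * ker y t = bumpF α x w - bumpF α x (w - y) := by
  rw [ker_int y hy (fun t => bump α x (w + t)) ((bump_cont α x).comp (by fun_prop)), bumpF_sub]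
  rw [intervalIntegral.integral_comp_add_left]
  congr 1
  ring

/-- clamp to [-1,1] -/
noncomputable def clamp (y : ℝ) : ℝ := max (-1) (min 1 y)

lemma clamp_abs (y : ℝ) : |clamp y| ≤ 1 := by
  unfold clamp
  rw [abs_le]; exact ⟨le_max_left _ _, max_le (by norm_num) (min_le_left _ _)⟩

lemma clamp_meas : Measurable clamp := by unfold clamp; fun_prop

lemma clamp_abs_le (y : ℝ) : |clamp y| ≤ |y| := by
  unfold clamp
  rcases max_cases (-1) (min 1 y) with h | h <;> rcases min_cases 1 y with g | g <;>
    rw [h.1] <;> rcases abs_cases y with k | k <;> (try rw [g.1]) <;>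
    (try rw [abs_neg]) <;> (try rw [abs_one]) <;> linarith [le_refl |y|]

lemma clamp_err (y : ℝ) {q : ℝ} (hq : 1 ≤ q) : |y - clamp y| ≤ |y| ^ q := by
  rcases le_total |y| 1 with h | h
  · have : clamp y = y := by
      unfold clamp; rw [abs_le] at h
      rw [min_eq_right h.2, max_eq_right h.1]
    rw [this]; simp; positivity
  · have h1 : |y - clamp y| ≤ |y| := by
      unfold clamp
      rcases max_cases (-1) (min 1 y) with h | h <;> rcases min_cases 1 y with g | g <;>
        rw [h.1] <;> (try rw [g.1]) <;> rw [abs_le] <;>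
        rcases abs_cases y with k | k <;> constructor <;> linarith
    calc _ ≤ |y| := h1
      _ = |y| ^ (1 : ℝ) := (Real.rpow_one _).symm
      _ ≤ _ := Real.rpow_le_rpow_of_exponent_le h hq


/-! ### Stein equation -/

noncomputable def gd (x : ℝ) : ℝ := Real.exp (-x ^ 2 / 2)

lemma gd_cont : Continuous gd := by unfold gd; fun_prop
lemma gd_pos (x : ℝ) : 0 < gd x := Real.exp_pos _
lemma gd_eq (x : ℝ) : gd x = Real.exp (-(1/2) * x ^ 2) := by unfold gd; congr 1; ring
lemma gd_int : Integrable gd := by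
  have := integrable_exp_neg_mul_sq (b := 1/2) (by norm_num)
  refine this.congr (Filter.Eventually.of_forall fun x => ?_)
  simp only [gd_eq]
lemma gd_total : ∫ x, gd x = Real.sqrt (2 * Real.pi) := by
  have := integral_gaussian (1/2)
  simp only [gd_eq]
  rw [this]; congr 1; ring

noncomputable def gmean (h : ℝ → ℝ) : ℝ := (Real.sqrt (2 * Real.pi))⁻¹ * ∫ x, h x * gd x

noncomputable def stein (h : ℝ → ℝ) (w : ℝ) : ℝ :=
  Real.exp (w ^ 2 / 2) * ∫ x in Set.Iic w, (h x - gmean h) * gd x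

noncomputable def steinD (h : ℝ → ℝ) (w : ℝ) : ℝ := w * stein h w + (h w - gmean h)

structure HOk (h : ℝ → ℝ) : Prop where
  cont : Continuous h
  nn : ∀ x, 0 ≤ h x
  le1 : ∀ x, h x ≤ 1

namespace HOk

lemma int {h : ℝ → ℝ} (H : HOk h) : Integrable (fun x => h x * gd x) := by
  refine gd_int.mono' (H.cont.mul gd_cont).aestronglyMeasurable ?_
  refine Filter.Eventually.of_forall fun x => ?_
  rw [Real.norm_eq_abs, abs_of_nonneg (mul_nonneg (H.nn x) (gd_pos x).le)]
  exact mul_le_of_le_one_left (gd_pos x).le (H.le1 x)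

lemma mean_nonneg {h : ℝ → ℝ} (H : HOk h) : 0 ≤ gmean h := by
  unfold gmean
  apply mul_nonneg (by positivity)
  exact integral_nonneg fun x => mul_nonneg (H.nn x) (gd_pos x).le

lemma mean_le {h : ℝ → ℝ} (H : HOk h) : gmean h ≤ 1 := by
  unfold gmean
  have : ∫ x, h x * gd x ≤ ∫ x, gd x :=
    integral_mono H.int gd_int fun x => mul_le_of_le_one_left (gd_pos x).le (H.le1 x)
  rw [gd_total] at this
  have hp : 0 < Real.sqrt (2 * Real.pi) := by positivity
  rw [inv_mul_le_iff₀ hp]; linarith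

lemma cen_abs {h : ℝ → ℝ} (H : HOk h) (x : ℝ) : |h x - gmean h| ≤ 1 := by
  rw [abs_le]; constructor <;> linarith [H.nn x, H.le1 x, H.mean_nonneg, H.mean_le]

lemma cint {h : ℝ → ℝ} (H : HOk h) : Integrable (fun x => (h x - gmean h) * gd x) := by
  simp only [sub_mul]
  exact H.int.sub (gd_int.const_mul _)

lemma ccont {h : ℝ → ℝ} (H : HOk h) : Continuous (fun x => (h x - gmean h) * gd x) :=
  (H.cont.sub continuous_const).mul gd_cont

lemma ctotal {h : ℝ → ℝ} (H : HOk h) : ∫ x, (h x - gmean h) * gd x = 0 := by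
  simp only [sub_mul]
  rw [integral_sub H.int (gd_int.const_mul _), integral_const_mul, gd_total]
  unfold gmean
  have hp : 0 < Real.sqrt (2 * Real.pi) := by positivity
  field_simp; ring

lemma mills_aux (q : ℝ → ℝ) (hq : ∀ x, |q x| ≤ 1) (w : ℝ) (hw : 0 ≤ w) :
    |Real.exp (w ^ 2 / 2) * ∫ x in Set.Ioi w, q x * gd x| ≤ 2 ∧
    |w * (Real.exp (w ^ 2 / 2) * ∫ x in Set.Ioi w, q x * gd x)| ≤ 1 := by
  have h0 : |∫ x in Set.Ioi w, q x * gd x| ≤ ∫ x in Set.Ioi w, gd x := by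
    rw [← Real.norm_eq_abs]
    refine norm_integral_le_of_norm_le gd_int.integrableOn ?_
    refine Filter.Eventually.of_forall fun x => ?_
    rw [norm_mul, Real.norm_eq_abs, Real.norm_eq_abs, abs_of_pos (gd_pos x)]
    exact mul_le_of_le_one_left (gd_pos x).le (hq x)
  have he : 0 < Real.exp (w ^ 2 / 2) := Real.exp_pos _
  have i2 : Integrable (fun x => gd (x - w)) := gd_int.comp_sub_right w
  have h1 : Real.exp (w ^ 2 / 2) * ∫ x in Set.Ioi w, gd x ≤ 2 := by
    rw [← integral_const_mul]
    calc ∫ x in Set.Ioi w, Real.exp (w ^ 2 / 2) * gd x ≤ ∫ x in Set.Ioi w, gd (x - w) := by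
          apply setIntegral_mono_on (gd_int.const_mul _).integrableOn i2.integrableOn
            measurableSet_Ioi
          intro x hx
          unfold gd
          rw [← Real.exp_add]
          apply Real.exp_le_exp.mpr
          have : 0 ≤ w * (x - w) := mul_nonneg hw (by linarith [Set.mem_Ioi.mp hx])
          nlinarith
      _ = ∫ x in Set.Ioi 0, gd x := by
          rw [← integral_indicator measurableSet_Ioi, ← integral_indicator measurableSet_Ioi,
            ← integral_sub_right_eq_self ((Set.Ioi 0).indicator fun x => gd x) w]
          congr 1
          ext x
          simp only [Set.indicator, Set.mem_Ioi, sub_pos]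
      _ = Real.sqrt (Real.pi / (1/2)) / 2 := by
          simp only [gd_eq]; exact integral_gaussian_Ioi (1/2)
      _ ≤ 2 := by
          have : Real.sqrt (Real.pi / (1/2)) ≤ 4 := by
            rw [Real.sqrt_le_left (by norm_num)]; linarith [Real.pi_le_four]
          linarith
  have h2 : w * (Real.exp (w ^ 2 / 2) * ∫ x in Set.Ioi w, gd x) ≤ 1 := by
    have d : ∀ x ∈ Set.Ici w, HasDerivAt (fun x => - gd x) (x * gd x) x := by
      intro x _
      unfold gd
      have : HasDerivAt (fun x : ℝ => -x ^ 2 / 2) (-x) x := by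
        have := (hasDerivAt_pow 2 x).neg.div_const 2
        refine this.congr_deriv ?_
        norm_num
        ring
      have := this.exp.neg
      refine this.congr_deriv ?_
      ring
    have t : Filter.Tendsto (fun x => - gd x) Filter.atTop (nhds 0) := by
      have : Filter.Tendsto (fun x : ℝ => -x ^ 2 / 2) Filter.atTop Filter.atBot := by
        have := Filter.tendsto_pow_atTop (α := ℝ) (n := 2) (by norm_num)
        have := Filter.tendsto_neg_atTop_atBot.comp this
        exact this.atBot_div_const (by norm_num)
      have := (Real.tendsto_exp_atBot.comp this).neg
      simpa [gd] using this
    have ii : IntegrableOn (fun x => x * gd x) (Set.Ioi w) :=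
      integrableOn_Ioi_deriv_of_nonneg' d
        (fun x hx => mul_nonneg (hw.trans (Set.mem_Ioi.mp hx).le) (gd_pos x).le) t
    have v := integral_Ioi_of_hasDerivAt_of_tendsto' d ii t
    have hm : w * ∫ x in Set.Ioi w, gd x ≤ ∫ x in Set.Ioi w, x * gd x := by
      rw [← integral_const_mul]
      apply setIntegral_mono_on (gd_int.const_mul _).integrableOn ii measurableSet_Ioi
      intro x hx
      exact mul_le_mul_of_nonneg_right (Set.mem_Ioi.mp hx).le (gd_pos x).le
    rw [v] at hm
    have hg : Real.exp (w ^ 2 / 2) * gd w = 1 := by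
      unfold gd; rw [← Real.exp_add]; simp; ring
    calc _ = Real.exp (w ^ 2 / 2) * (w * ∫ x in Set.Ioi w, gd x) := by ring
      _ ≤ Real.exp (w ^ 2 / 2) * (0 - - gd w) := by gcongr
      _ = 1 := by rw [← hg]; ring
  constructor
  · rw [abs_mul, abs_of_pos he]
    exact (mul_le_mul_of_nonneg_left h0 he.le).trans h1
  · rw [abs_mul, abs_mul, abs_of_pos he, abs_of_nonneg hw]
    exact (mul_le_mul_of_nonneg_left (mul_le_mul_of_nonneg_left h0 he.le) hw).trans h2

lemma stein_both {h : ℝ → ℝ} (H : HOk h) (w : ℝ) : |stein h w| ≤ 2 ∧ |w * stein h w| ≤ 1 := by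
  rcases le_total 0 w with hw | hw
  · have e : stein h w = -(Real.exp (w ^ 2 / 2) * ∫ x in Set.Ioi w, (h x - gmean h) * gd x) := by
      unfold stein
      have := integral_add_compl (measurableSet_Iic (a := w)) H.cint
      rw [Set.compl_Iic, H.ctotal] at this
      rw [← mul_neg]; congr 1; linarith
    have := mills_aux (fun x => h x - gmean h) H.cen_abs w hw
    rw [e, mul_neg, abs_neg, abs_neg]
    exact this
  · have e : stein h w = Real.exp ((-w) ^ 2 / 2) *
        ∫ x in Set.Ioi (-w), (h (-x) - gmean h) * gd x := by
      unfold stein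
      have := integral_comp_neg_Ioi (-w) (fun x => (h x - gmean h) * gd x)
      rw [neg_neg] at this
      rw [← this, neg_sq]
      congr 2
      ext x; unfold gd; rw [neg_sq]
    have := mills_aux (fun x => h (-x) - gmean h) (fun x => H.cen_abs (-x)) (-w) (by linarith)
    rw [e]
    refine ⟨this.1, ?_⟩
    have h2 := this.2
    rwa [neg_mul, abs_neg] at h2

lemma stein_deriv {h : ℝ → ℝ} (H : HOk h) (w : ℝ) : HasDerivAt (stein h) (steinD h w) w := by
  have e : stein h = fun w => Real.exp (w ^ 2 / 2) *
      ((∫ x in Set.Iic 0, (h x - gmean h) * gd x) + ∫ x in (0:ℝ)..w, (h x - gmean h) * gd x) := by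
    ext w; unfold stein; congr 1
    have := intervalIntegral.integral_Iic_sub_Iic (a := 0) (b := w) H.cint.integrableOn
      H.cint.integrableOn
    linarith
  have d1 : HasDerivAt (fun w : ℝ => ∫ x in (0:ℝ)..w, (h x - gmean h) * gd x)
      ((h w - gmean h) * gd w) w :=
    intervalIntegral.integral_hasDerivAt_right (H.ccont.intervalIntegrable _ _)
      (H.ccont.stronglyMeasurableAtFilter _ _) H.ccont.continuousAt
  have d2 : HasDerivAt (fun w : ℝ => Real.exp (w ^ 2 / 2)) (Real.exp (w ^ 2 / 2) * w) w := by
    have := (hasDerivAt_pow 2 w).div_const 2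
    have := this.exp
    refine this.congr_deriv ?_
    norm_num
  have d3 := d2.mul (d1.const_add (∫ x in Set.Iic 0, (h x - gmean h) * gd x))
  have hg : Real.exp (w ^ 2 / 2) * gd w = 1 := by
    unfold gd; rw [← Real.exp_add]; simp; ring
  have e2 := congrFun e w
  rw [e]
  refine d3.congr_deriv ?_
  unfold steinD
  rw [e2]
  linear_combination (h w - gmean h) * hg

lemma steinD_abs {h : ℝ → ℝ} (H : HOk h) (w : ℝ) : |steinD h w| ≤ 2 := by
  unfold steinD
  have := (H.stein_both w).2
  have := H.cen_abs w
  refine (abs_add_le _ _).trans (by linarith)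

lemma stein_cont {h : ℝ → ℝ} (H : HOk h) : Continuous (stein h) :=
  continuous_iff_continuousAt.mpr fun w => (H.stein_deriv w).continuousAt

lemma steinD_cont {h : ℝ → ℝ} (H : HOk h) : Continuous (steinD h) := by
  unfold steinD
  exact (continuous_id.mul H.stein_cont).add (H.cont.sub continuous_const)

lemma stein_lip {h : ℝ → ℝ} (H : HOk h) (a b : ℝ) : |stein h b - stein h a| ≤ 2 * |b - a| := by
  have := Convex.norm_image_sub_le_of_norm_hasDerivWithin_le (f := stein h) (f' := steinD h)
    (s := Set.univ) (C := 2) (x := a) (y := b)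
    (fun x _ => (H.stein_deriv x).hasDerivWithinAt) (fun x _ => H.steinD_abs x)
    convex_univ (Set.mem_univ _) (Set.mem_univ _)
  exact this

lemma stein_g {h : ℝ → ℝ} (H : HOk h) (w s : ℝ) : |(w + s) * stein h (w + s) - w * stein h w| ≤
    min 2 (|s| * (2 + 2 * |w|)) := by
  apply le_min
  · have := (H.stein_both w).2
    have := (H.stein_both (w + s)).2
    refine (abs_sub _ _).trans (by linarith)
  · have e : (w + s) * stein h (w + s) - w * stein h w =
      s * stein h (w + s) + w * (stein h (w + s) - stein h w) := by ring
    rw [e]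
    refine (abs_add_le _ _).trans ?_
    rw [abs_mul, abs_mul]
    have a := (H.stein_both (w + s)).1
    have b := H.stein_lip w (w + s)
    rw [add_sub_cancel_left] at b
    nlinarith [abs_nonneg s, abs_nonneg w, mul_le_mul_of_nonneg_left a (abs_nonneg s),
      mul_le_mul_of_nonneg_left b (abs_nonneg w)]

/-- first-order expansion given a bound on the oscillation of the derivative -/
lemma stein_taylor {h : ℝ → ℝ} (H : HOk h) (w y D r : ℝ) (hy : |y| ≤ r)
    (hD : ∀ s, |s| ≤ r → |steinD h (w + s) - steinD h w| ≤ D) :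
    |stein h w - stein h (w - y) - y * steinD h w| ≤ |y| * D := by
  have := Convex.norm_image_sub_le_of_norm_hasDerivWithin_le
    (f := fun x => stein h x - x * steinD h w) (f' := fun x => steinD h x - steinD h w)
    (s := Metric.closedBall w r) (C := D) (x := w - y) (y := w)
    (fun x _ => by
      have := (H.stein_deriv x).sub ((hasDerivAt_id x).mul_const (steinD h w))
      simp only [one_mul] at this
      exact this.hasDerivWithinAt)
    (fun x hx => by
      have := hD (x - w) (by simpa [Real.dist_eq] using hx)
      simpa using this)
    (convex_closedBall w r) (by simpa [Real.dist_eq] using hy)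
    (by simpa using (abs_nonneg y).trans hy)
  simp only [Real.norm_eq_abs] at this
  rw [show w - (w - y) = y by ring, mul_comm D] at this
  convert this using 2; ring
end HOk

noncomputable def hz (α z w : ℝ) : ℝ := 1 - ramp α z w

lemma hz_ok (α z : ℝ) : HOk (hz α z) where
  cont := by unfold hz; exact continuous_const.sub (ramp_cont _ _)
  nn x := by unfold hz; linarith [ramp_le_one α z x]
  le1 x := by unfold hz; linarith [ramp_nonneg α z x]


lemma cdf_eq (z : ℝ) : stdGaussianCDF z =
    (Real.sqrt (2 * Real.pi))⁻¹ * ∫ x in Set.Iic z, gd x := by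
  unfold stdGaussianCDF gd
  rw [integral_const_mul]

lemma cdf_lip (z α : ℝ) (hα : 0 < α) :
    stdGaussianCDF (z + α) - stdGaussianCDF z ≤ α / 2 := by
  rw [cdf_eq, cdf_eq, ← mul_sub, intervalIntegral.integral_Iic_sub_Iic gd_int.integrableOn
    gd_int.integrableOn]
  have h1 : ‖∫ x in z..(z + α), gd x‖ ≤ 1 * |z + α - z| := by
    apply intervalIntegral.norm_integral_le_of_norm_le_const
    intro x _
    rw [Real.norm_eq_abs, abs_of_pos (gd_pos x)]
    unfold gd
    apply Real.exp_le_one_iff.mpr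
    nlinarith [sq_nonneg x]
  rw [add_sub_cancel_left, abs_of_pos hα, one_mul] at h1
  have h2 : 2 ≤ Real.sqrt (2 * Real.pi) := by
    apply Real.le_sqrt_of_sq_le; linarith [Real.pi_gt_three]
  have h3 : (Real.sqrt (2 * Real.pi))⁻¹ ≤ 2⁻¹ := inv_anti₀ (by norm_num) h2
  calc _ ≤ (Real.sqrt (2 * Real.pi))⁻¹ * α := by
        gcongr; exact (le_abs_self _).trans h1
    _ ≤ 2⁻¹ * α := by gcongr
    _ = α / 2 := by ring

lemma gmean_le_cdf {α : ℝ} (hα : 0 < α) (z : ℝ) : gmean (hz α z) ≤ stdGaussianCDF (z + α) := by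
  rw [cdf_eq]; unfold gmean
  gcongr
  rw [← integral_indicator measurableSet_Iic]
  apply integral_mono (hz_ok α z).int (gd_int.indicator measurableSet_Iic)
  intro x
  simp only [Set.indicator, Set.mem_Iic]
  split_ifs with h
  · exact mul_le_of_le_one_left (gd_pos x).le ((hz_ok α z).le1 x)
  · unfold hz; rw [ramp_one hα (not_le.mp h).le]; simp

lemma cdf_le_gmean {α : ℝ} (hα : 0 < α) (z : ℝ) : stdGaussianCDF z ≤ gmean (hz α z) := by
  rw [cdf_eq]; unfold gmean
  gcongr
  rw [← integral_indicator measurableSet_Iic]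
  apply integral_mono (gd_int.indicator measurableSet_Iic) (hz_ok α z).int
  intro x
  simp only [Set.indicator, Set.mem_Iic]
  split_ifs with h
  · unfold hz; rw [ramp_zero hα h]; simp
  · exact mul_nonneg ((hz_ok α z).nn x) (gd_pos x).le


/-! ### Probabilistic setup -/

section general
variable {Ω : Type*} [mΩ : MeasurableSpace Ω] {μ : Measure Ω} [IsProbabilityMeasure μ]
variable {ι : Type*}

def sig (X : ι → Ω → ℝ) (T : Finset ι) : MeasurableSpace Ω :=
  MeasurableSpace.comap (fun ω (j : T) => X j.1 ω) inferInstance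

lemma sig_X (X : ι → Ω → ℝ) {T : Finset ι} {k : ι} (hk : k ∈ T) : Measurable[sig X T] (X k) := by
  have h1 : Measurable[sig X T] (fun ω (j : T) => X j.1 ω) := comap_measurable _
  exact (measurable_pi_apply (⟨k, hk⟩ : T)).comp h1

lemma sig_mono (X : ι → Ω → ℝ) {T T' : Finset ι} (h : T ⊆ T') : sig X T ≤ sig X T' := by
  have : Measurable[sig X T'] (fun ω (j : T) => X j.1 ω) :=
    @measurable_pi_lambda _ _ _ (sig X T') _ _ (fun j => sig_X X (h j.2))
  exact this.comap_le

lemma sig_le {X : ι → Ω → ℝ} (hX : ∀ i, Measurable (X i)) (T : Finset ι) : sig X T ≤ mΩ := by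
  have : Measurable (fun ω (j : T) => X j.1 ω) := measurable_pi_lambda _ (fun j => hX j.1)
  exact this.comap_le

def SS (X : ι → Ω → ℝ) (T : Finset ι) (ω : Ω) : ℝ := ∑ k ∈ T, X k ω
def UU (X : ι → Ω → ℝ) (T : Finset ι) (ω : Ω) : ℝ := ∑ k ∈ T, |X k ω|

lemma SS_sig (X : ι → Ω → ℝ) {T T' : Finset ι} (h : T ⊆ T') : Measurable[sig X T'] (SS X T) :=
  @Finset.measurable_fun_sum _ _ _ _ _ _ (sig X T') _ T (fun _ hi => sig_X X (h hi))

lemma UU_sig (X : ι → Ω → ℝ) {T T' : Finset ι} (h : T ⊆ T') : Measurable[sig X T'] (UU X T) :=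
  @Finset.measurable_fun_sum _ _ _ _ _ _ (sig X T') _ T
    (fun _ hi => measurable_abs.comp (sig_X X (h hi)))

lemma UU_nonneg (X : ι → Ω → ℝ) (T : Finset ι) (ω : Ω) : 0 ≤ UU X T ω :=
  Finset.sum_nonneg fun _ _ => abs_nonneg _

lemma SS_le_UU (X : ι → Ω → ℝ) (T : Finset ι) (ω : Ω) : |SS X T ω| ≤ UU X T ω :=
  Finset.abs_sum_le_sum_abs _ _

lemma UU_mono (X : ι → Ω → ℝ) {T T' : Finset ι} (h : T ⊆ T') (ω : Ω) : UU X T ω ≤ UU X T' ω :=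
  Finset.sum_le_sum_of_subset_of_nonneg h fun _ _ _ => abs_nonneg _

lemma indepFun_of {m1 m2 : MeasurableSpace Ω} (h : Indep m1 m2 μ) {f g : Ω → ℝ}
    (hf : Measurable[m1] f) (hg : Measurable[m2] g) : IndepFun f g μ := by
  rw [IndepFun_iff_Indep]
  exact indep_of_indep_of_le_left (indep_of_indep_of_le_right h hg.comap_le) hf.comap_le

lemma young3 {p a u v : ℝ} (hp : 2 < p) (ha : 0 ≤ a) (hu : 0 ≤ u) (hv : 0 ≤ v) :
    a * u * v ^ (p - 2) ≤ (a ^ p + u ^ p + (p - 2) * v ^ p) / p := by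
  have hp0 : 0 < p := by linarith
  have := Real.geom_mean_le_arith_mean3_weighted (w₁ := 1 / p) (w₂ := 1 / p) (w₃ := (p - 2) / p)
    (p₁ := a ^ p) (p₂ := u ^ p) (p₃ := v ^ p) (by positivity) (by positivity)
    (div_nonneg (by linarith) hp0.le) (by positivity) (by positivity) (by positivity)
    (by field_simp; ring)
  rw [← Real.rpow_mul ha, ← Real.rpow_mul hu, ← Real.rpow_mul hv, mul_one_div_cancel hp0.ne',
    mul_div_cancel₀ _ hp0.ne', Real.rpow_one, Real.rpow_one] at this
  refine this.trans (le_of_eq ?_)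
  field_simp

lemma young_int {p : ℝ} (hp : 2 < p) {a u v : Ω → ℝ} (ma : Measurable a) (mu : Measurable u)
    (mv : Measurable v) (ha : ∀ ω, 0 ≤ a ω) (hu : ∀ ω, 0 ≤ u ω) (hv : ∀ ω, 0 ≤ v ω)
    (ia : Integrable (fun ω => a ω ^ p) μ) (iu : Integrable (fun ω => u ω ^ p) μ)
    (iv : Integrable (fun ω => v ω ^ p) μ) :
    Integrable (fun ω => a ω * u ω * v ω ^ (p - 2)) μ ∧
    ∫ ω, a ω * u ω * v ω ^ (p - 2) ∂μ ≤
      (∫ ω, a ω ^ p ∂μ + ∫ ω, u ω ^ p ∂μ + (p - 2) * ∫ ω, v ω ^ p ∂μ) / p := by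
  have id : Integrable (fun ω => (a ω ^ p + u ω ^ p + (p - 2) * v ω ^ p) / p) μ :=
    ((ia.fun_add iu).fun_add (iv.const_mul _)).div_const _
  have ii : Integrable (fun ω => a ω * u ω * v ω ^ (p - 2)) μ := by
    refine id.mono' (by fun_prop) (Filter.Eventually.of_forall fun ω => ?_)
    rw [Real.norm_eq_abs, abs_of_nonneg]
    · exact young3 hp (ha ω) (hu ω) (hv ω)
    · exact mul_nonneg (mul_nonneg (ha ω) (hu ω)) (Real.rpow_nonneg (hv ω) _)
  refine ⟨ii, (integral_mono ii id fun ω => young3 hp (ha ω) (hu ω) (hv ω)).trans (le_of_eq ?_)⟩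
  rw [integral_div, integral_add (ia.fun_add iu) (iv.const_mul _), integral_add ia iu,
    integral_const_mul]

lemma young_prod {p : ℝ} (hp : 2 < p) {a u v : Ω → ℝ} (ma : Measurable a) (mu : Measurable u)
    (mv : Measurable v) (ha : ∀ ω, 0 ≤ a ω) (hu : ∀ ω, 0 ≤ u ω) (hv : ∀ ω, 0 ≤ v ω)
    (ia : Integrable (fun ω => a ω ^ p) μ) (iu : Integrable (fun ω => u ω ^ p) μ)
    (iv : Integrable (fun ω => v ω ^ p) μ) :
    Integrable (fun ω => a ω * u ω) μ ∧ Integrable (fun ω => v ω ^ (p - 2)) μ ∧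
    (∫ ω, a ω * u ω ∂μ) * ∫ ω, v ω ^ (p - 2) ∂μ ≤
      (∫ ω, a ω ^ p ∂μ + ∫ ω, u ω ^ p ∂μ + (p - 2) * ∫ ω, v ω ^ p ∂μ) / p := by
  have i1 := (young_int (μ := μ) hp ma mu (measurable_const (a := (1 : ℝ))) ha hu
    (fun _ => zero_le_one) ia iu (by simp)).1
  have i2 := (young_int (μ := μ) hp (measurable_const (a := (1 : ℝ)))
    (measurable_const (a := (1 : ℝ))) mv
    (fun _ => zero_le_one) (fun _ => zero_le_one) hv (by simp) (by simp) iv).1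
  simp only [Real.one_rpow, mul_one] at i1
  simp only [one_mul] at i2
  refine ⟨i1, i2, ?_⟩
  have h1 : ∀ ω, (a ω * u ω) * ∫ ω', v ω' ^ (p - 2) ∂μ ≤
      (a ω ^ p + u ω ^ p + (p - 2) * ∫ ω', v ω' ^ p ∂μ) / p := by
    intro ω
    have := (young_int (μ := μ) hp (measurable_const (a := a ω))
      (measurable_const (a := u ω)) mv
      (fun _ => ha ω) (fun _ => hu ω) hv (by simp) (by simp) iv).2
    rw [integral_const_mul] at this
    simpa using this
  rw [← integral_mul_const]
  have id : Integrable (fun ω => (a ω ^ p + u ω ^ p + (p - 2) * ∫ ω', v ω' ^ p ∂μ) / p) μ :=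
    ((ia.fun_add iu).fun_add (integrable_const _)).div_const _
  refine (integral_mono (i1.mul_const _) id h1).trans (le_of_eq ?_)
  rw [integral_div, integral_add (ia.fun_add iu) (integrable_const _), integral_add ia iu]
  simp

end general

structure LD {Ω : Type*} [MeasurableSpace Ω] (μ : Measure Ω)
    {ι : Type*} [Fintype ι] [DecidableEq ι] (X : ι → Ω → ℝ) (A B C : ι → Finset ι)
    (W : Ω → ℝ) (p : ℝ) (κ : ℕ) (b : ℝ) : Prop where
  hp1 : 2 < p
  hp2 : p ≤ 3
  meas : ∀ i, Measurable (X i)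
  mean : ∀ i, ∫ ω, X i ω ∂μ = 0
  Lp : ∀ i, Integrable (fun ω => |X i ω| ^ p) μ
  iA : ∀ i, i ∈ A i
  AB : ∀ i, A i ⊆ B i
  BC : ∀ i, B i ⊆ C i
  ind1 : ∀ i, Indep (MeasurableSpace.comap (X i) inferInstance) (sig X (A i)ᶜ) μ
  ind2 : ∀ i, Indep (sig X (A i)) (sig X (B i)ᶜ) μ
  ind3 : ∀ i, Indep (sig X (B i)) (sig X (C i)ᶜ) μ
  hW : W = SS X Finset.univ
  var : ∫ ω, (W ω) ^ 2 ∂μ = 1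
  κpos : 1 ≤ κ
  cN : ∀ i, (Finset.univ.filter fun j => (C i ∩ B j).Nonempty).card ≤ κ
  cR : ∀ i, (Finset.univ.filter fun j => i ∈ C j).card ≤ κ
  hb : (κ : ℝ) ^ (p - 1) * ∑ i, ∫ ω, |X i ω| ^ p ∂μ ≤ b
  b0 : 0 < b
  b1 : b ≤ 1 / 75

namespace LD
variable {Ω : Type*} [mΩ : MeasurableSpace Ω] {μ : Measure Ω} [IsProbabilityMeasure μ]
  {ι : Type*} [Fintype ι] [DecidableEq ι] {X : ι → Ω → ℝ} {A B C : ι → Finset ι}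
  {W : Ω → ℝ} {p : ℝ} {κ : ℕ} {b : ℝ}

lemma kpos (H : LD μ X A B C W p κ b) : (0 : ℝ) < κ := by
  have := H.κpos; exact_mod_cast this

lemma cC (H : LD μ X A B C W p κ b) (i : ι) : (C i).card ≤ κ := by
  refine (Finset.card_le_card ?_).trans (H.cN i)
  intro k hk
  simp only [Finset.mem_filter, Finset.mem_univ, true_and]
  exact ⟨k, Finset.mem_inter.mpr ⟨hk, H.AB k (H.iA k)⟩⟩

lemma iC (H : LD μ X A B C W p κ b) (i : ι) : i ∈ C i := H.BC i (H.AB i (H.iA i))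

lemma mUU (H : LD μ X A B C W p κ b) (T : Finset ι) : Measurable (UU X T) :=
  (UU_sig X (Finset.Subset.refl T)).mono (sig_le H.meas T) le_rfl

lemma mSS (H : LD μ X A B C W p κ b) (T : Finset ι) : Measurable (SS X T) :=
  (SS_sig X (Finset.Subset.refl T)).mono (sig_le H.meas T) le_rfl

lemma mW (H : LD μ X A B C W p κ b) : Measurable W := by rw [H.hW]; exact H.mSS _

lemma UU_pow (H : LD μ X A B C W p κ b) {T : Finset ι} (hT : T.card ≤ κ) (ω : Ω) :
    UU X T ω ^ p ≤ (κ : ℝ) ^ (p - 1) * ∑ k ∈ T, |X k ω| ^ p := by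
  have h1 := Real.rpow_sum_le_const_mul_sum_rpow T (fun k => X k ω) (p := p)
    (by linarith [H.hp1])
  refine h1.trans ?_
  gcongr
  linarith [H.hp1]

lemma UU_Lp (H : LD μ X A B C W p κ b) {T : Finset ι} (hT : T.card ≤ κ) :
    Integrable (fun ω => UU X T ω ^ p) μ ∧
    ∫ ω, UU X T ω ^ p ∂μ ≤ (κ : ℝ) ^ (p - 1) * ∑ k ∈ T, ∫ ω, |X k ω| ^ p ∂μ := by
  have id : Integrable (fun ω => (κ : ℝ) ^ (p - 1) * ∑ k ∈ T, |X k ω| ^ p) μ :=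
    (integrable_finsetSum T fun k _ => H.Lp k).const_mul _
  have ii : Integrable (fun ω => UU X T ω ^ p) μ := by
    refine id.mono' ((H.mUU T).pow_const p).aestronglyMeasurable
      (Filter.Eventually.of_forall fun ω => ?_)
    rw [Real.norm_eq_abs, abs_of_nonneg (Real.rpow_nonneg (UU_nonneg X T ω) _)]
    exact H.UU_pow hT ω
  refine ⟨ii, (integral_mono ii id fun ω => H.UU_pow hT ω).trans (le_of_eq ?_)⟩
  rw [integral_const_mul, integral_finsetSum T fun k _ => H.Lp k]

lemma sum_UU (H : LD μ X A B C W p κ b) :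
    ∑ j, ∫ ω, UU X (C j) ω ^ p ∂μ ≤ (κ : ℝ) * b := by
  have hk := H.kpos
  calc ∑ j, ∫ ω, UU X (C j) ω ^ p ∂μ
      ≤ ∑ j, (κ : ℝ) ^ (p - 1) * ∑ k ∈ C j, ∫ ω, |X k ω| ^ p ∂μ :=
        Finset.sum_le_sum fun j _ => (H.UU_Lp (H.cC j)).2
    _ = (κ : ℝ) ^ (p - 1) * ∑ k, ∑ j, if k ∈ C j then ∫ ω, |X k ω| ^ p ∂μ else 0 := by
        rw [← Finset.mul_sum, Finset.sum_comm]
        congr 1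
        refine Finset.sum_congr rfl fun j _ => ?_
        rw [Finset.sum_ite_mem, Finset.univ_inter]
    _ ≤ (κ : ℝ) ^ (p - 1) * ∑ k, (κ : ℝ) * ∫ ω, |X k ω| ^ p ∂μ := by
        gcongr with k _
        rw [← Finset.sum_filter, Finset.sum_const, nsmul_eq_mul]
        gcongr
        exact H.cR k
    _ = κ * ((κ : ℝ) ^ (p - 1) * ∑ k, ∫ ω, |X k ω| ^ p ∂μ) := by
        rw [← Finset.mul_sum]; ring
    _ ≤ κ * b := by gcongr; exact H.hb

lemma sum_X (H : LD μ X A B C W p κ b) :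
    ∑ j, ∫ ω, (κ * |X j ω|) ^ p ∂μ ≤ (κ : ℝ) * b := by
  have hk := H.kpos
  have : ∀ j, ∫ ω, (κ * |X j ω|) ^ p ∂μ = κ * ((κ : ℝ) ^ (p - 1) * ∫ ω, |X j ω| ^ p ∂μ) := by
    intro j
    have : (κ : ℝ) ^ p = κ * (κ : ℝ) ^ (p - 1) := by
      rw [Real.rpow_sub_one hk.ne']; field_simp
    simp_rw [Real.mul_rpow hk.le (abs_nonneg _)]
    rw [integral_const_mul, this, mul_assoc]
  simp_rw [this]
  rw [← Finset.mul_sum, ← Finset.mul_sum]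
  gcongr; exact H.hb

lemma X_Lp (H : LD μ X A B C W p κ b) (j : ι) : Integrable (fun ω => (κ * |X j ω|) ^ p) μ := by
  simp_rw [Real.mul_rpow H.kpos.le (abs_nonneg _)]
  exact (H.Lp j).const_mul _

/-- `∑ E |X_j| U_j^{p-1} ≤ b` -/
lemma bound1 (H : LD μ X A B C W p κ b) :
    (∀ j, Integrable (fun ω => |X j ω| * UU X (C j) ω * UU X (C j) ω ^ (p - 2)) μ) ∧
    ∑ j, ∫ ω, |X j ω| * UU X (C j) ω * UU X (C j) ω ^ (p - 2) ∂μ ≤ b := by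
  have hk := H.kpos
  have hp := H.hp1
  have y := fun j => young_int (μ := μ) H.hp1 (a := fun ω => κ * |X j ω|) (u := UU X (C j))
    (v := UU X (C j)) ((H.meas j).abs.const_mul _) (H.mUU _) (H.mUU _)
    (fun ω => by positivity) (UU_nonneg X _) (UU_nonneg X _) (H.X_Lp j)
    (H.UU_Lp (H.cC j)).1 (H.UU_Lp (H.cC j)).1
  simp only [mul_assoc, integral_const_mul] at y
  simp only [mul_assoc]
  refine ⟨fun j => ?_, ?_⟩
  · have := ((y j).1).const_mul (κ : ℝ)⁻¹
    simpa [← mul_assoc, hk.ne'] using this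
  · have s := Finset.sum_le_sum (s := Finset.univ) fun j _ => (y j).2
    rw [← Finset.mul_sum, ← Finset.sum_div, Finset.sum_add_distrib, Finset.sum_add_distrib,
      ← Finset.mul_sum] at s
    have a1 := H.sum_X
    have a2 := H.sum_UU
    have : (κ : ℝ) * ∑ j, ∫ ω, |X j ω| * (UU X (C j) ω * UU X (C j) ω ^ (p - 2)) ∂μ ≤ κ * b := by
      refine s.trans ?_
      rw [div_le_iff₀ (by linarith)]
      nlinarith
    exact le_of_mul_le_mul_left this hk

lemma bound2 (H : LD μ X A B C W p κ b) :
    (∀ j, Integrable (fun ω => |X j ω| * UU X (C j) ω) μ) ∧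
    (∀ j, Integrable (fun ω => UU X (C j) ω ^ (p - 2)) μ) ∧
    ∑ j, (∫ ω, |X j ω| * UU X (C j) ω ∂μ) * ∫ ω, UU X (C j) ω ^ (p - 2) ∂μ ≤ b := by
  have hk := H.kpos
  have hp := H.hp1
  have y := fun j => young_prod (μ := μ) H.hp1 (a := fun ω => κ * |X j ω|) (u := UU X (C j))
    (v := UU X (C j)) ((H.meas j).abs.const_mul _) (H.mUU _) (H.mUU _)
    (fun ω => by positivity) (UU_nonneg X _) (UU_nonneg X _) (H.X_Lp j)
    (H.UU_Lp (H.cC j)).1 (H.UU_Lp (H.cC j)).1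
  simp only [mul_assoc, integral_const_mul] at y
  refine ⟨fun j => ?_, fun j => (y j).2.1, ?_⟩
  · have := ((y j).1).const_mul (κ : ℝ)⁻¹
    simpa [← mul_assoc, hk.ne'] using this
  · have s := Finset.sum_le_sum (s := Finset.univ) fun j _ => (y j).2.2
    rw [← Finset.mul_sum, ← Finset.sum_div, Finset.sum_add_distrib, Finset.sum_add_distrib,
      ← Finset.mul_sum] at s
    have a1 := H.sum_X
    have a2 := H.sum_UU
    have : (κ : ℝ) * ∑ j, (∫ ω, |X j ω| * UU X (C j) ω ∂μ) *
        ∫ ω, UU X (C j) ω ^ (p - 2) ∂μ ≤ κ * b := by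
      refine s.trans ?_
      rw [div_le_iff₀ (by linarith)]
      nlinarith
    exact le_of_mul_le_mul_left this hk

lemma bound3 (H : LD μ X A B C W p κ b) :
    (∀ j, Integrable (fun ω => X j ω ^ 2 * UU X (C j) ω ^ (p - 2)) μ) ∧
    κ * ∑ j, ∫ ω, X j ω ^ 2 * UU X (C j) ω ^ (p - 2) ∂μ ≤ b := by
  have hk := H.kpos
  have hp := H.hp1
  have y := fun j => young_int (μ := μ) H.hp1 (a := fun ω => κ * |X j ω|)
    (u := fun ω => κ * |X j ω|)
    (v := UU X (C j)) ((H.meas j).abs.const_mul _) ((H.meas j).abs.const_mul _) (H.mUU _)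
    (fun ω => by positivity) (fun ω => by positivity) (UU_nonneg X _) (H.X_Lp j)
    (H.X_Lp j) (H.UU_Lp (H.cC j)).1
  have e : ∀ j ω, κ * |X j ω| * (κ * |X j ω|) * UU X (C j) ω ^ (p - 2) =
      (κ : ℝ) ^ 2 * (X j ω ^ 2 * UU X (C j) ω ^ (p - 2)) := by
    intro j ω; rw [← sq_abs (X j ω)]; ring
  simp only [e, integral_const_mul] at y
  refine ⟨fun j => ?_, ?_⟩
  · have := ((y j).1).const_mul ((κ : ℝ) ^ 2)⁻¹
    simpa [← mul_assoc, hk.ne'] using this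
  · have s := Finset.sum_le_sum (s := Finset.univ) fun j _ => (y j).2
    rw [← Finset.mul_sum, ← Finset.sum_div, Finset.sum_add_distrib, Finset.sum_add_distrib,
      ← Finset.mul_sum] at s
    have a1 := H.sum_X
    have a2 := H.sum_UU
    have : (κ : ℝ) ^ 2 * ∑ j, ∫ ω, X j ω ^ 2 * UU X (C j) ω ^ (p - 2) ∂μ ≤ κ * b := by
      refine s.trans ?_
      rw [div_le_iff₀ (by linarith)]
      nlinarith
    rw [sq, mul_assoc] at this
    exact le_of_mul_le_mul_left this hk

lemma X_mem2 (H : LD μ X A B C W p κ b) (j : ι) : MemLp (X j) 2 μ := by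
  have h : MemLp (X j) (ENNReal.ofReal p) μ := by
    have hp := H.hp1
    rw [← integrable_norm_rpow_iff (H.meas j).aestronglyMeasurable
      (by simp; linarith) ENNReal.ofReal_ne_top, ENNReal.toReal_ofReal (by linarith)]
    simpa using H.Lp j
  refine h.mono_exponent ?_
  rw [show (2 : ENNReal) = ENNReal.ofReal 2 by simp]
  exact ENNReal.ofReal_le_ofReal H.hp1.le

lemma SS_mem2 (H : LD μ X A B C W p κ b) (T : Finset ι) : MemLp (SS X T) 2 μ :=
  memLp_finsetSum T fun j _ => H.X_mem2 j

lemma X_int (H : LD μ X A B C W p κ b) (j : ι) : Integrable (X j) μ :=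
  (H.X_mem2 j).integrable (by norm_num)

lemma SS_int (H : LD μ X A B C W p κ b) (T : Finset ι) : Integrable (SS X T) μ :=
  (H.SS_mem2 T).integrable (by norm_num)

lemma XSS_int (H : LD μ X A B C W p κ b) (j : ι) (T : Finset ι) :
    Integrable (fun ω => X j ω * SS X T ω) μ :=
  (H.X_mem2 j).integrable_mul (H.SS_mem2 T)

lemma X_sq (H : LD μ X A B C W p κ b) (j : ι) : Integrable (fun ω => X j ω ^ 2) μ :=
  (H.X_mem2 j).integrable_sq

lemma SS_sq (H : LD μ X A B C W p κ b) (T : Finset ι) : Integrable (fun ω => SS X T ω ^ 2) μ :=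
  (H.SS_mem2 T).integrable_sq

lemma small (H : LD μ X A B C W p κ b) {T : Finset ι} (hT : T.card ≤ κ) :
    κ * ∑ k ∈ T, ∫ ω, X k ω ^ 2 ∂μ ≤ 1 / 16 := by
  have hk := H.kpos
  have hp := H.hp1
  have hp3 := H.hp2
  have hp0 : 0 < p := by linarith
  -- pointwise inequality
  have pw : ∀ x : ℝ, 0 ≤ x → x ^ 2 ≤ (1 - 2 / p) / 16 + (2 / p) * 4 * x ^ p := by
    intro x hx
    have b1 := one_add_mul_self_le_rpow_one_add (s := (4 * x) ^ 2 - 1)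
      (by nlinarith [sq_nonneg (4 * x)]) (p := p / 2) (by linarith)
    have b0 : ((4 * x) ^ 2) ^ (p / 2) = 4 ^ p * x ^ p := by
      rw [← Real.rpow_natCast (4 * x) 2, ← Real.rpow_mul (by positivity),
        show ((2 : ℕ) : ℝ) * (p / 2) = p by push_cast; ring, Real.mul_rpow (by norm_num) hx]
    rw [add_sub_cancel, b0] at b1
    have h4 : (4 : ℝ) ^ p ≤ 64 := by
      calc (4 : ℝ) ^ p ≤ 4 ^ (3 : ℝ) := Real.rpow_le_rpow_of_exponent_le (by norm_num) hp3
        _ = 64 := by norm_num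
    have hxp : 0 ≤ x ^ p := by positivity
    have b2 : 1 + p / 2 * ((4 * x) ^ 2 - 1) ≤ 64 * x ^ p := by
      have := mul_le_mul_of_nonneg_right h4 hxp
      linarith
    have b3 : p / 2 * (16 * x ^ 2) ≤ p / 2 - 1 + 64 * x ^ p := by nlinarith
    have : x ^ 2 = (2 / p) / 16 * (p / 2 * (16 * x ^ 2)) := by field_simp
    rw [this]
    calc (2 / p) / 16 * (p / 2 * (16 * x ^ 2)) ≤ (2 / p) / 16 * (p / 2 - 1 + 64 * x ^ p) := by
          gcongr
      _ = _ := by field_simp; ring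
  have e1 : ∀ k, (κ : ℝ) ^ 2 * ∫ ω, X k ω ^ 2 ∂μ ≤
      (1 - 2 / p) / 16 + (2 / p) * 4 * ∫ ω, (κ * |X k ω|) ^ p ∂μ := by
    intro k
    rw [← integral_const_mul]
    calc ∫ ω, (κ : ℝ) ^ 2 * X k ω ^ 2 ∂μ
        ≤ ∫ ω, ((1 - 2 / p) / 16 + (2 / p) * 4 * (κ * |X k ω|) ^ p) ∂μ := by
          apply integral_mono ((H.X_sq k).const_mul _)
            ((integrable_const _).fun_add ((H.X_Lp k).const_mul _))
          intro ω
          have := pw (κ * |X k ω|) (by positivity)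
          rwa [mul_pow, sq_abs] at this
      _ = _ := by
          rw [integral_add (integrable_const _) ((H.X_Lp k).const_mul _), integral_const_mul]
          simp
  have e2 := Finset.sum_le_sum (s := T) fun k _ => e1 k
  rw [← Finset.mul_sum, Finset.sum_add_distrib, ← Finset.mul_sum, Finset.sum_const,
    nsmul_eq_mul] at e2
  have e3 : ∑ k ∈ T, ∫ ω, (κ * |X k ω|) ^ p ∂μ ≤ κ * b := by
    refine le_trans ?_ H.sum_X
    exact Finset.sum_le_sum_of_subset_of_nonneg (Finset.subset_univ _)
      fun k _ _ => integral_nonneg fun ω => by positivity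
  have hb := H.b1
  have hq : 2 / p ≤ 1 := by rw [div_le_one hp0]; linarith
  have hq0 : 0 ≤ 2 / p := by positivity
  have hT' : (T.card : ℝ) ≤ κ := by exact_mod_cast hT
  have e4 : (κ : ℝ) ^ 2 * ∑ k ∈ T, ∫ ω, X k ω ^ 2 ∂μ ≤ κ * (1 / 16) := by
    refine e2.trans ?_
    have a1 : (T.card : ℝ) * ((1 - 2 / p) / 16) ≤ κ * ((1 - 2 / p) / 16) := by
      gcongr
    have a2 : 2 / p * 4 * ∑ k ∈ T, ∫ ω, (κ * |X k ω|) ^ p ∂μ ≤ 2 / p * 4 * (κ * (1 / 75)) := by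
      gcongr
      refine e3.trans ?_
      gcongr
    have a3 : 2 / p * 4 * (κ * (1 / 75)) ≤ κ * ((2 / p) / 16) := by
      have : 0 ≤ 2 / p * κ := by positivity
      nlinarith
    linarith
  rw [sq, mul_assoc] at e4
  exact le_of_mul_le_mul_left e4 hk

lemma SS_sq_small (H : LD μ X A B C W p κ b) {T : Finset ι} (hT : T.card ≤ κ) :
    ∫ ω, SS X T ω ^ 2 ∂μ ≤ 1 / 16 := by
  refine le_trans ?_ (H.small hT)
  rw [← integral_finsetSum T fun k _ => H.X_sq k, ← integral_const_mul]
  apply integral_mono (H.SS_sq T) ((integrable_finsetSum T fun k _ => H.X_sq k).const_mul _)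
  intro ω
  have := sq_sum_le_card_mul_sum_sq (s := T) (f := fun k => X k ω)
  refine this.trans ?_
  have hT' : (T.card : ℝ) ≤ κ := by exact_mod_cast hT
  exact mul_le_mul_of_nonneg_right hT' (Finset.sum_nonneg fun _ _ => sq_nonneg _)

lemma SS_abs_small (H : LD μ X A B C W p κ b) {T : Finset ι} (hT : T.card ≤ κ) :
    ∫ ω, |SS X T ω| ∂μ ≤ 1 / 4 := by
  have h1 := H.SS_sq_small hT
  have h2 : ∫ ω, |SS X T ω| ∂μ ≤ ∫ ω, (2 * SS X T ω ^ 2 + 1 / 8) ∂μ := by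
    apply integral_mono (H.SS_int T).abs (((H.SS_sq T).const_mul _).fun_add (integrable_const _))
    intro ω
    simp only
    rw [← sq_abs]
    nlinarith [sq_nonneg (|SS X T ω| - 1 / 4)]
  rw [integral_add ((H.SS_sq T).const_mul _) (integrable_const _), integral_const_mul] at h2
  simp at h2
  linarith

lemma W_abs (H : LD μ X A B C W p κ b) : ∫ ω, |W ω| ∂μ ≤ 1 := by
  have h1 := H.var
  have i2 : Integrable (fun ω => W ω ^ 2) μ := by rw [H.hW]; exact H.SS_sq _
  have h2 : ∫ ω, |W ω| ∂μ ≤ ∫ ω, (1 / 2 * W ω ^ 2 + 1 / 2) ∂μ := by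
    apply integral_mono _ ((i2.const_mul _).fun_add (integrable_const _))
    · intro ω
      simp only
      rw [← sq_abs]
      nlinarith [sq_nonneg (|W ω| - 1)]
    · rw [H.hW]; exact (H.SS_int _).abs
  rw [integral_add (i2.const_mul _) (integrable_const _), integral_const_mul] at h2
  simp at h2
  linarith

lemma W_split (H : LD μ X A B C W p κ b) (T : Finset ι) (ω : Ω) :
    W ω = SS X T ω + SS X Tᶜ ω := by
  rw [H.hW]; exact (Finset.sum_add_sum_compl T _).symm

lemma SSc_abs (H : LD μ X A B C W p κ b) {T : Finset ι} (hT : T.card ≤ κ) :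
    ∫ ω, |SS X Tᶜ ω| ∂μ ≤ 5 / 4 := by
  have hWi : Integrable W μ := by rw [H.hW]; exact H.SS_int _
  calc ∫ ω, |SS X Tᶜ ω| ∂μ ≤ ∫ ω, (|W ω| + |SS X T ω|) ∂μ := by
        apply integral_mono (H.SS_int _).abs (hWi.abs.fun_add (H.SS_int _).abs)
        intro ω
        have := H.W_split T ω
        beta_reduce
        rw [show SS X Tᶜ ω = W ω - SS X T ω by linarith]
        exact abs_sub _ _
    _ ≤ 5 / 4 := by
        rw [integral_add hWi.abs (H.SS_int _).abs]
        linarith [H.W_abs, H.SS_abs_small hT]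

/-- `X_j` times something independent of it has mean zero. -/
lemma X_ortho (H : LD μ X A B C W p κ b) (j : ι) {g : Ω → ℝ} (hg : Measurable[sig X (A j)ᶜ] g) :
    ∫ ω, X j ω * g ω ∂μ = 0 := by
  have hi : IndepFun (X j) g μ := indepFun_of (H.ind1 j) (comap_measurable _) hg
  rw [hi.integral_fun_mul_eq_mul_integral (H.meas j).aestronglyMeasurable
    (hg.mono (sig_le H.meas _) le_rfl).aestronglyMeasurable, H.mean, zero_mul]

lemma sum_XY (H : LD μ X A B C W p κ b) : ∑ j, ∫ ω, X j ω * SS X (A j) ω ∂μ = 1 := by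
  have h1 : ∀ j, ∫ ω, X j ω * W ω ∂μ = ∫ ω, X j ω * SS X (A j) ω ∂μ := by
    intro j
    have e : ∀ ω, X j ω * W ω = X j ω * SS X (A j) ω + X j ω * SS X (A j)ᶜ ω := by
      intro ω; rw [H.W_split (A j) ω]; ring
    simp_rw [e]
    rw [integral_add (H.XSS_int _ _) (H.XSS_int _ _), H.X_ortho j (SS_sig X (Finset.Subset.refl _)),
      add_zero]
  simp_rw [← h1]
  rw [← integral_finsetSum]
  · rw [← H.var]
    congr 1; ext ω
    rw [← Finset.sum_mul, sq]
    congr 1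
    rw [H.hW]; rfl
  · intro j _; rw [H.hW]; exact H.XSS_int _ _

lemma sum_XY_small (H : LD μ X A B C W p κ b) {T : Finset ι} (hT : T.card ≤ κ) :
    ∑ j ∈ T, ∫ ω, X j ω * SS X (A j) ω ∂μ ≤ 1 / 16 := by
  have hk := H.kpos
  have h1 : ∀ j, ∫ ω, X j ω * SS X (A j) ω ∂μ ≤ κ / 2 * ∫ ω, X j ω ^ 2 ∂μ + (1 / (32 * κ)) := by
    intro j
    have hA : (A j).card ≤ κ := (Finset.card_le_card ((H.AB j).trans (H.BC j))).trans (H.cC j)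
    have := H.SS_sq_small hA
    calc ∫ ω, X j ω * SS X (A j) ω ∂μ
        ≤ ∫ ω, (κ / 2 * X j ω ^ 2 + 1 / (2 * κ) * SS X (A j) ω ^ 2) ∂μ := by
          apply integral_mono (H.XSS_int _ _)
            (((H.X_sq j).const_mul _).fun_add ((H.SS_sq _).const_mul _))
          intro ω
          have : 0 ≤ 1 / (2 * κ) * (κ * X j ω - SS X (A j) ω) ^ 2 := by positivity
          have e : 1 / (2 * κ) * (κ * X j ω - SS X (A j) ω) ^ 2 =
            (κ / 2 * X j ω ^ 2 + 1 / (2 * κ) * SS X (A j) ω ^ 2) - X j ω * SS X (A j) ω := by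
            field_simp; ring
          simp only
          linarith
      _ = κ / 2 * ∫ ω, X j ω ^ 2 ∂μ + 1 / (2 * κ) * ∫ ω, SS X (A j) ω ^ 2 ∂μ := by
          rw [integral_add ((H.X_sq j).const_mul _) ((H.SS_sq _).const_mul _),
            integral_const_mul, integral_const_mul]
      _ ≤ κ / 2 * ∫ ω, X j ω ^ 2 ∂μ + 1 / (2 * κ) * (1 / 16) := by gcongr
      _ = _ := by field_simp; ring
  refine (Finset.sum_le_sum fun j _ => h1 j).trans ?_
  rw [Finset.sum_add_distrib, ← Finset.mul_sum, Finset.sum_const, nsmul_eq_mul]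
  have a := H.small hT
  have hT' : (T.card : ℝ) ≤ κ := by exact_mod_cast hT
  have : (T.card : ℝ) * (1 / (32 * κ)) ≤ κ * (1 / (32 * κ)) := by gcongr
  have e : (κ : ℝ) * (1 / (32 * κ)) = 1 / 32 := by field_simp
  linarith

end LD


/-! ### Conditional concentration: the ramp lemma -/

noncomputable abbrev tm : Measure ℝ := volume.restrict (Set.Icc (-1 : ℝ) 1)

section conc
variable {Ω : Type*} [mΩ : MeasurableSpace Ω] {μ : Measure Ω} [IsProbabilityMeasure μ]
variable {ι : Type*}

lemma swap_integrable {g : Ω → ℝ} (hg : Integrable g μ) {G : Ω × ℝ → ℝ} (mG : Measurable G)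
    {K : ℝ} (hG : ∀ q, |G q| ≤ K) : Integrable (fun q => g q.1 * G q) (μ.prod tm) :=
  (hg.comp_fst tm).mul_bdd (c := K) mG.aestronglyMeasurable
    (Filter.Eventually.of_forall fun q => by rw [Real.norm_eq_abs]; exact hG q)

lemma swap_eq {g : Ω → ℝ} (hg : Integrable g μ) {G : Ω × ℝ → ℝ} (mG : Measurable G)
    {K : ℝ} (hG : ∀ q, |G q| ≤ K) :
    ∫ ω, g ω * ∫ t, G (ω, t) ∂tm ∂μ = ∫ t, ∫ ω, g ω * G (ω, t) ∂μ ∂tm := by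
  have := integral_integral_swap (f := fun ω t => g ω * G (ω, t)) (swap_integrable hg mG hG)
  rw [← this]
  simp_rw [integral_const_mul]

lemma swap_left {g : Ω → ℝ} (hg : Integrable g μ) {G : Ω × ℝ → ℝ} (mG : Measurable G)
    {K : ℝ} (hG : ∀ q, |G q| ≤ K) :
    Integrable (fun ω => g ω * ∫ t, G (ω, t) ∂tm) μ := by
  have := (swap_integrable hg mG hG).integral_prod_left
  simpa only [integral_const_mul] using this

lemma swap_right {g : Ω → ℝ} (hg : Integrable g μ) {G : Ω × ℝ → ℝ} (mG : Measurable G)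
    {K : ℝ} (hG : ∀ q, |G q| ≤ K) :
    Integrable (fun t => ∫ ω, g ω * G (ω, t) ∂μ) tm :=
  (swap_integrable hg mG hG).integral_prod_right

def Conc (μ : Measure Ω) (X : ι → Ω → ℝ) (T : Finset ι) (W : Ω → ℝ) (α δ : ℝ) : Prop :=
  ∀ e : Ω → ℝ, (∀ ω, 0 ≤ e ω) → Integrable e μ → Measurable[sig X T] e → ∀ x : ℝ,
    ∫ ω, e ω * (Set.Icc x (x + α)).indicator 1 (W ω) ∂μ ≤ δ * ∫ ω, e ω ∂μ

lemma mul_bdd' {g : Ω → ℝ} (hg : Integrable g μ) {G : Ω → ℝ} (mG : Measurable G)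
    {K : ℝ} (hG : ∀ q, |G q| ≤ K) : Integrable (fun ω => g ω * G ω) μ :=
  hg.mul_bdd (c := K) mG.aestronglyMeasurable
    (Filter.Eventually.of_forall fun q => by rw [Real.norm_eq_abs]; exact hG q)

lemma ind_abs_le {β : Type*} (s : Set β) (x : β) : |s.indicator (1 : β → ℝ) x| ≤ 1 := by
  by_cases h : x ∈ s <;> simp [h]

lemma ind_nonneg {β : Type*} (s : Set β) (x : β) : 0 ≤ s.indicator (1 : β → ℝ) x := by
  by_cases h : x ∈ s <;> simp [h]

lemma ramp_conc {X : ι → Ω → ℝ} {T : Finset ι} {W : Ω → ℝ} {α δ : ℝ}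
    (hX : ∀ i, Measurable (X i)) (hα : 0 < α) (mW : Measurable W) (hC : Conc μ X T W α δ)
    {e ρ : Ω → ℝ} (e0 : ∀ ω, 0 ≤ e ω) (ie : Integrable e μ) (me : Measurable[sig X T] e)
    (ρ0 : ∀ ω, 0 ≤ ρ ω) (ρ1 : ∀ ω, ρ ω ≤ 1) (mρ : Measurable[sig X T] ρ) (z : ℝ) :
    ∫ ω, e ω * (ramp α z (W ω + ρ ω) - ramp α z (W ω - ρ ω)) ∂μ ≤
      2 * δ / α * ∫ ω, e ω * ρ ω ∂μ := by
  have hle := sig_le hX T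
  have mρ' : Measurable ρ := mρ.mono hle le_rfl
  -- the kernels
  let G1 : Ω × ℝ → ℝ := fun q => (Set.Icc (-ρ q.1) (ρ q.1)).indicator 1 q.2
  let G2 : Ω × ℝ → ℝ := fun q => (Set.Icc z (z + α)).indicator 1 (W q.1 + q.2)
  have mG1 : Measurable G1 := by
    have hs : MeasurableSet {q : Ω × ℝ | -ρ q.1 ≤ q.2 ∧ q.2 ≤ ρ q.1} := by
      apply MeasurableSet.inter
      · exact measurableSet_le (mρ'.comp measurable_fst).neg measurable_snd
      · exact measurableSet_le measurable_snd (mρ'.comp measurable_fst)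
    exact (measurable_one.indicator hs :
      Measurable ({q : Ω × ℝ | -ρ q.1 ≤ q.2 ∧ q.2 ≤ ρ q.1}.indicator (1 : Ω × ℝ → ℝ)))
  have mG2 : Measurable G2 :=
    (measurable_one.indicator measurableSet_Icc).comp
      ((mW.comp measurable_fst).add measurable_snd)
  have mG12 : Measurable (fun q => G1 q * G2 q) := mG1.mul mG2
  have b1 : ∀ q, |G1 q| ≤ 1 := fun q => ind_abs_le _ _
  have b2 : ∀ q, |G2 q| ≤ 1 := fun q => ind_abs_le _ _
  have b12 : ∀ q, |G1 q * G2 q| ≤ 1 := fun q => by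
    rw [abs_mul]; exact mul_le_one₀ (b1 q) (abs_nonneg _) (b2 q)
  have s1 : ∫ ω, e ω * (ramp α z (W ω + ρ ω) - ramp α z (W ω - ρ ω)) ∂μ ≤
      ∫ ω, (1 / α) * (e ω * ∫ u, G1 (ω, u) * G2 (ω, u) ∂tm) ∂μ := by
    apply integral_mono
    · refine mul_bdd' ie (K := 2) ?_ ?_
      · exact ((ramp_cont α z).measurable.comp (mW.add mρ')).sub
          ((ramp_cont α z).measurable.comp (mW.sub mρ'))
      · intro ω; rw [abs_le]
        constructor <;> linarith [ramp_nonneg α z (W ω + ρ ω), ramp_nonneg α z (W ω - ρ ω),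
          ramp_le_one α z (W ω + ρ ω), ramp_le_one α z (W ω - ρ ω)]
    · exact (swap_left ie mG12 b12).const_mul _
    · intro ω
      have := mul_le_mul_of_nonneg_left (ramp_sub_le hα z (W ω) (ρ ω) (ρ0 ω) (ρ1 ω)) (e0 ω)
      refine this.trans (le_of_eq ?_)
      simp only [G1, G2]; ring
  have s2 : ∀ u, ∫ ω, e ω * (G1 (ω, u) * G2 (ω, u)) ∂μ ≤ δ * ∫ ω, e ω * G1 (ω, u) ∂μ := by
    intro u
    have mg : Measurable[sig X T] (fun ω => G1 (ω, u)) := by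
      have hs : (fun ω => G1 (ω, u)) = (Set.Ici |u|).indicator (1 : ℝ → ℝ) ∘ ρ := by
        ext ω
        simp only [G1, Set.indicator, Set.mem_Icc, Set.mem_Ici, Function.comp, abs_le]
        rfl
      rw [hs]
      exact (measurable_one.indicator measurableSet_Ici).comp mρ
    have := hC (fun ω => e ω * G1 (ω, u)) (fun ω => mul_nonneg (e0 ω) (ind_nonneg _ _))
      (mul_bdd' ie (mg.mono hle le_rfl) fun ω => b1 (ω, u)) (me.mul mg) (z - u)
    refine le_trans (le_of_eq ?_) this
    congr 1; ext ω
    rw [mul_assoc]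
    congr 2
    simp only [G2, Set.indicator, Set.mem_Icc]
    congr 1
    rw [eq_iff_iff]
    constructor <;> rintro ⟨_, _⟩ <;> constructor <;> linarith
  have s3 : ∀ ω, ∫ u, G1 (ω, u) ∂tm = 2 * ρ ω := by
    intro ω
    show ∫ u in Set.Icc (-1 : ℝ) 1, (Set.Icc (-ρ ω) (ρ ω)).indicator 1 u = _
    rw [integral_indicator_one measurableSet_Icc, measureReal_restrict_apply measurableSet_Icc,
      Set.inter_eq_left.mpr (Set.Icc_subset_Icc (by linarith [ρ1 ω]) (ρ1 ω)), Real.volume_real_Icc]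
    rw [max_eq_left (by linarith [ρ0 ω])]; ring
  calc _ ≤ _ := s1
    _ = (1 / α) * ∫ u, ∫ ω, e ω * (G1 (ω, u) * G2 (ω, u)) ∂μ ∂tm := by
        rw [integral_const_mul, swap_eq ie mG12 b12]
    _ ≤ (1 / α) * ∫ u, δ * ∫ ω, e ω * G1 (ω, u) ∂μ ∂tm := by
        gcongr
        · exact swap_right ie mG12 b12
        · exact (swap_right ie mG1 b1).const_mul _
        · exact measurableSet_Icc.nullMeasurableSet
        · exact s2 _
    _ = (1 / α) * (δ * ∫ ω, e ω * (2 * ρ ω) ∂μ) := by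
        rw [integral_const_mul, ← swap_eq ie mG1 b1]
        simp_rw [s3]
    _ = _ := by
        have : ∀ ω, e ω * (2 * ρ ω) = 2 * (e ω * ρ ω) := fun ω => by ring
        simp_rw [this]
        rw [integral_const_mul]; ring

end conc


/-! ### The truncated kernels and their variance -/

noncomputable def Yc {Ω ι : Type*} (X : ι → Ω → ℝ) (A : ι → Finset ι) (j : ι) (ω : Ω) : ℝ :=
  clamp (SS X (A j) ω)

noncomputable def KK {Ω ι : Type*} (X : ι → Ω → ℝ) (A : ι → Finset ι) (j : ι) (t : ℝ) (ω : Ω) : ℝ :=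
  X j ω * ker (Yc X A j ω) t

lemma clamp_pow {y u q : ℝ} (h : |y| ≤ u) (q0 : 0 < q) (q1 : q ≤ 1) : |clamp y| ≤ u ^ q := by
  have h0 : 0 ≤ u := (abs_nonneg y).trans h
  rcases le_total u 1 with hu | hu
  · refine (clamp_abs_le y).trans (h.trans ?_)
    rcases h0.eq_or_lt with rfl | h0
    · rw [Real.zero_rpow q0.ne']
    · calc u = u ^ (1 : ℝ) := (Real.rpow_one u).symm
        _ ≤ u ^ q := Real.rpow_le_rpow_of_exponent_ge h0 hu q1
  · exact (clamp_abs y).trans (Real.one_le_rpow hu q0.le)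

namespace LD
variable {Ω : Type*} [mΩ : MeasurableSpace Ω] {μ : Measure Ω} [IsProbabilityMeasure μ]
  {ι : Type*} [Fintype ι] [DecidableEq ι] {X : ι → Ω → ℝ} {A B C : ι → Finset ι}
  {W : Ω → ℝ} {p : ℝ} {κ : ℕ} {b : ℝ}

lemma AC (H : LD μ X A B C W p κ b) (j : ι) : A j ⊆ C j := (H.AB j).trans (H.BC j)

lemma Y_le (H : LD μ X A B C W p κ b) (j : ι) (ω : Ω) : |SS X (A j) ω| ≤ UU X (C j) ω :=
  (SS_le_UU X _ ω).trans (UU_mono X (H.AC j) ω)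

lemma Yc_pow (H : LD μ X A B C W p κ b) (j : ι) (ω : Ω) :
    |Yc X A j ω| ≤ UU X (C j) ω ^ (p - 2) :=
  clamp_pow (H.Y_le j ω) (by linarith [H.hp1]) (by linarith [H.hp2])

lemma pw1 (H : LD μ X A B C W p κ b) (j : ι) (ω : Ω) :
    |X j ω| * |SS X (A j) ω - Yc X A j ω| ≤
      |X j ω| * UU X (C j) ω * UU X (C j) ω ^ (p - 2) := by
  have hp := H.hp1
  rw [mul_assoc]
  gcongr
  refine (clamp_err (SS X (A j) ω) (q := p - 1) (by linarith)).trans ?_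
  have hU := UU_nonneg X (C j) ω
  calc |SS X (A j) ω| ^ (p - 1) ≤ UU X (C j) ω ^ (p - 1) := by
        exact Real.rpow_le_rpow (abs_nonneg _) (H.Y_le j ω) (by linarith)
    _ = UU X (C j) ω * UU X (C j) ω ^ (p - 2) := by
        rw [show p - 1 = 1 + (p - 2) by ring, Real.rpow_add_of_nonneg hU (by norm_num) (by linarith),
          Real.rpow_one]

lemma pw2 (H : LD μ X A B C W p κ b) (j : ι) (ω : Ω) :
    |X j ω| * |Yc X A j ω| * |Yc X A j ω| ≤
      |X j ω| * UU X (C j) ω * UU X (C j) ω ^ (p - 2) := by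
  have hU := UU_nonneg X (C j) ω
  have := H.Yc_pow j ω
  have h2 : |Yc X A j ω| ≤ UU X (C j) ω := (clamp_abs_le _).trans (H.Y_le j ω)
  gcongr

lemma pw3 (H : LD μ X A B C W p κ b) (j : ι) (ω : Ω) :
    X j ω ^ 2 * |Yc X A j ω| ≤ X j ω ^ 2 * UU X (C j) ω ^ (p - 2) := by
  have := H.Yc_pow j ω
  gcongr

lemma Yc_sig (H : LD μ X A B C W p κ b) {j : ι} {T : Finset ι} (h : A j ⊆ T) :
    Measurable[sig X T] (Yc X A j) := clamp_meas.comp (SS_sig X h)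

lemma Yc_m (H : LD μ X A B C W p κ b) (j : ι) : Measurable (Yc X A j) :=
  clamp_meas.comp (H.mSS _)

lemma KK_sig (H : LD μ X A B C W p κ b) {j : ι} {T : Finset ι} (h : A j ⊆ T) (t : ℝ) :
    Measurable[sig X T] (KK X A j t) := by
  have h1 : Measurable (fun y : ℝ => ker y t) := ker_meas.comp (measurable_id.prodMk measurable_const)
  exact (sig_X X (h (H.iA j))).mul (h1.comp (H.Yc_sig h))

lemma KK_m (H : LD μ X A B C W p κ b) (j : ι) (t : ℝ) : Measurable (KK X A j t) :=
  (H.KK_sig (Finset.Subset.refl _) t).mono (sig_le H.meas _) le_rfl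

lemma KK_mem2 (H : LD μ X A B C W p κ b) (j : ι) (t : ℝ) : MemLp (KK X A j t) 2 μ := by
  refine (H.X_mem2 j).mono (H.KK_m j t).aestronglyMeasurable (Filter.Eventually.of_forall fun ω => ?_)
  rw [Real.norm_eq_abs, Real.norm_eq_abs, KK, abs_mul]
  exact mul_le_of_le_one_right (abs_nonneg _) (ker_abs_le _ _)

lemma KK_int (H : LD μ X A B C W p κ b) (j : ι) (t : ℝ) : Integrable (KK X A j t) μ :=
  (H.KK_mem2 j t).integrable (by norm_num)

/-- centred kernels -/
noncomputable def ZZ (μ : Measure Ω) (X : ι → Ω → ℝ) (A : ι → Finset ι) (j : ι) (t : ℝ) (ω : Ω) : ℝ :=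
  KK X A j t ω - ∫ ω', KK X A j t ω' ∂μ

lemma ZZ_mem2 (H : LD μ X A B C W p κ b) (j : ι) (t : ℝ) : MemLp (ZZ μ X A j t) 2 μ :=
  (H.KK_mem2 j t).sub (memLp_const _)

lemma ZZ_mean (H : LD μ X A B C W p κ b) (j : ι) (t : ℝ) : ∫ ω, ZZ μ X A j t ω ∂μ = 0 := by
  unfold ZZ
  rw [integral_sub (H.KK_int j t) (integrable_const _)]; simp

lemma ZZ_sig (H : LD μ X A B C W p κ b) {j : ι} {T : Finset ι} (h : A j ⊆ T) (t : ℝ) :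
    Measurable[sig X T] (ZZ μ X A j t) := (H.KK_sig h t).sub measurable_const

lemma ZZ_var (H : LD μ X A B C W p κ b) (j : ι) (t : ℝ) :
    ∫ ω, ZZ μ X A j t ω ^ 2 ∂μ ≤ ∫ ω, X j ω ^ 2 * |ker (Yc X A j ω) t| ∂μ := by
  set m := ∫ ω', KK X A j t ω' ∂μ with hm
  have e : ∀ ω, ZZ μ X A j t ω ^ 2 = KK X A j t ω ^ 2 - (2 * m * KK X A j t ω - m ^ 2) := by
    intro ω; unfold ZZ; rw [← hm]; ring
  have e2 : ∀ ω, X j ω ^ 2 * |ker (Yc X A j ω) t| = KK X A j t ω ^ 2 := by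
    intro ω; rw [KK, mul_pow, ker_sq]
  simp_rw [e, e2]
  have i0 : Integrable (fun ω => 2 * m * KK X A j t ω - m ^ 2) μ :=
    ((H.KK_int j t).const_mul _).sub (integrable_const _)
  rw [integral_sub (H.KK_mem2 j t).integrable_sq
    i0,
    integral_sub ((H.KK_int j t).const_mul _) (integrable_const _), integral_const_mul, ← hm]
  simp
  nlinarith [sq_nonneg m]

lemma ZZ_cov (H : LD μ X A B C W p κ b) (j k : ι) (t : ℝ) :
    Integrable (fun ω => ZZ μ X A j t ω * ZZ μ X A k t ω) μ ∧
    ∫ ω, ZZ μ X A j t ω * ZZ μ X A k t ω ∂μ ≤ if (B j ∩ A k).Nonempty then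
      (∫ ω, ZZ μ X A j t ω ^ 2 ∂μ + ∫ ω, ZZ μ X A k t ω ^ 2 ∂μ) / 2 else 0 := by
  have ii : Integrable (fun ω => ZZ μ X A j t ω * ZZ μ X A k t ω) μ :=
    (H.ZZ_mem2 j t).integrable_mul (H.ZZ_mem2 k t)
  refine ⟨ii, ?_⟩
  split_ifs with h
  · have i1 := (H.ZZ_mem2 j t).integrable_sq
    have i2 := (H.ZZ_mem2 k t).integrable_sq
    rw [← integral_add i1 i2, ← integral_div]
    apply integral_mono ii ((i1.fun_add i2).div_const _)
    intro ω
    beta_reduce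
    nlinarith [sq_nonneg (ZZ μ X A j t ω - ZZ μ X A k t ω)]
  · have hs : A k ⊆ (B j)ᶜ := by
      intro l hl
      rw [Finset.mem_compl]
      intro hc
      exact h ⟨l, Finset.mem_inter.mpr ⟨hc, hl⟩⟩
    have hi : IndepFun (ZZ μ X A j t) (ZZ μ X A k t) μ :=
      indepFun_of (H.ind2 j) (H.ZZ_sig (Finset.Subset.refl _) t) (H.ZZ_sig hs t)
    rw [hi.integral_fun_mul_eq_mul_integral (H.ZZ_mem2 j t).1 (H.ZZ_mem2 k t).1,
      H.ZZ_mean, zero_mul]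

lemma var_bound (H : LD μ X A B C W p κ b) (J : Finset ι) (t : ℝ) :
    Integrable (fun ω => (∑ j ∈ J, ZZ μ X A j t ω) ^ 2) μ ∧
    ∫ ω, (∑ j ∈ J, ZZ μ X A j t ω) ^ 2 ∂μ ≤
      κ * ∑ j ∈ J, ∫ ω, X j ω ^ 2 * |ker (Yc X A j ω) t| ∂μ := by
  have hk := H.kpos
  refine ⟨(memLp_finsetSum J fun j _ => H.ZZ_mem2 j t).integrable_sq, ?_⟩
  have v0 : ∀ j, 0 ≤ ∫ ω, ZZ μ X A j t ω ^ 2 ∂μ := fun j => integral_nonneg fun ω => sq_nonneg _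
  have e : ∀ ω, (∑ j ∈ J, ZZ μ X A j t ω) ^ 2 =
      ∑ j ∈ J, ∑ k ∈ J, ZZ μ X A j t ω * ZZ μ X A k t ω := by
    intro ω; rw [sq, Finset.sum_mul_sum]
  simp_rw [e]
  rw [integral_finsetSum _ fun j _ => integrable_finsetSum _ fun k _ => (H.ZZ_cov j k t).1]
  simp_rw [integral_finsetSum J fun k _ => (H.ZZ_cov _ k t).1]
  have c1 : ∀ j, ∑ k ∈ J, (if (B j ∩ A k).Nonempty then (1 : ℝ) else 0) ≤ κ := by
    intro j
    rw [← Finset.sum_filter, Finset.sum_const, nsmul_eq_mul, mul_one]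
    refine Nat.cast_le.mpr ((Finset.card_le_card ?_).trans (H.cN j))
    intro k hk
    simp only [Finset.mem_filter, Finset.mem_univ, true_and] at hk ⊢
    exact hk.2.mono (Finset.inter_subset_inter (H.BC j) (H.AB k))
  have c2 : ∀ k, ∑ j ∈ J, (if (B j ∩ A k).Nonempty then (1 : ℝ) else 0) ≤ κ := by
    intro k
    rw [← Finset.sum_filter, Finset.sum_const, nsmul_eq_mul, mul_one]
    refine Nat.cast_le.mpr ((Finset.card_le_card ?_).trans (H.cN k))
    intro j hj
    simp only [Finset.mem_filter, Finset.mem_univ, true_and] at hj ⊢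
    rw [Finset.inter_comm]
    exact hj.2.mono (Finset.inter_subset_inter (Finset.Subset.refl _) (H.AC k))
  calc ∑ j ∈ J, ∑ k ∈ J, ∫ ω, ZZ μ X A j t ω * ZZ μ X A k t ω ∂μ
      ≤ ∑ j ∈ J, ∑ k ∈ J, ((1 / 2 * (∫ ω, ZZ μ X A j t ω ^ 2 ∂μ) *
            (if (B j ∩ A k).Nonempty then (1 : ℝ) else 0)) +
          (1 / 2 * (∫ ω, ZZ μ X A k t ω ^ 2 ∂μ) *
            (if (B j ∩ A k).Nonempty then (1 : ℝ) else 0))) := by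
        refine Finset.sum_le_sum fun j _ => Finset.sum_le_sum fun k _ => ?_
        refine (H.ZZ_cov j k t).2.trans (le_of_eq ?_)
        split_ifs <;> ring
    _ = ∑ j ∈ J, 1 / 2 * (∫ ω, ZZ μ X A j t ω ^ 2 ∂μ) *
            (∑ k ∈ J, if (B j ∩ A k).Nonempty then (1 : ℝ) else 0) +
        ∑ k ∈ J, 1 / 2 * (∫ ω, ZZ μ X A k t ω ^ 2 ∂μ) *
            (∑ j ∈ J, if (B j ∩ A k).Nonempty then (1 : ℝ) else 0) := by
        simp_rw [Finset.sum_add_distrib, Finset.mul_sum]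
        congr 1
        rw [Finset.sum_comm]
    _ ≤ ∑ j ∈ J, 1 / 2 * (∫ ω, ZZ μ X A j t ω ^ 2 ∂μ) * κ +
        ∑ k ∈ J, 1 / 2 * (∫ ω, ZZ μ X A k t ω ^ 2 ∂μ) * κ := by
        refine add_le_add (Finset.sum_le_sum fun j _ => ?_) (Finset.sum_le_sum fun j _ => ?_)
        · exact mul_le_mul_of_nonneg_left (c1 j) (by have := v0 j; positivity)
        · exact mul_le_mul_of_nonneg_left (c2 j) (by have := v0 j; positivity)
    _ = κ * ∑ j ∈ J, ∫ ω, ZZ μ X A j t ω ^ 2 ∂μ := by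
        rw [← Finset.sum_add_distrib, Finset.mul_sum]
        refine Finset.sum_congr rfl fun j _ => by ring
    _ ≤ _ := mul_le_mul_of_nonneg_left (Finset.sum_le_sum fun j _ => H.ZZ_var j t) hk.le

end LD


/-! ### The concentration step -/

namespace LD
variable {Ω : Type*} [mΩ : MeasurableSpace Ω] {μ : Measure Ω} [IsProbabilityMeasure μ]
  {ι : Type*} [Fintype ι] [DecidableEq ι] {X : ι → Ω → ℝ} {A B C : ι → Finset ι}
  {W : Ω → ℝ} {p : ℝ} {κ : ℕ} {b : ℝ}

def NN (B C : ι → Finset ι) (i : ι) : Finset ι := Finset.univ.filter fun j => (C i ∩ B j).Nonempty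

lemma NNc {i j : ι} (hj : j ∈ (NN B C i)ᶜ) : B j ⊆ (C i)ᶜ := by
  intro l hl
  rw [Finset.mem_compl]
  intro hc
  rw [Finset.mem_compl] at hj
  apply hj
  simp only [NN, Finset.mem_filter, Finset.mem_univ, true_and]
  exact ⟨l, Finset.mem_inter.mpr ⟨hc, hl⟩⟩

lemma indC (H : LD μ X A B C W p κ b) {i : ι} {e g : Ω → ℝ} (ie : Integrable e μ)
    (me : Measurable[sig X (B i)] e) (ig : Integrable g μ) (mg : Measurable[sig X (C i)ᶜ] g) :
    Integrable (fun ω => e ω * g ω) μ ∧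
    ∫ ω, e ω * g ω ∂μ = (∫ ω, e ω ∂μ) * ∫ ω, g ω ∂μ := by
  have hi : IndepFun e g μ := indepFun_of (H.ind3 i) me mg
  exact ⟨hi.integrable_mul ie ig, hi.integral_fun_mul_eq_mul_integral ie.1 ig.1⟩

lemma bump_shift (H : LD μ X A B C W p κ b) {i : ι} {α δ : ℝ} (hα : 0 < α)
    (hC : Conc μ X (B i) W α δ) {e : Ω → ℝ} (e0 : ∀ ω, 0 ≤ e ω) (ie : Integrable e μ)
    (me : Measurable[sig X (B i)] e) (x t : ℝ) (ht : |t| ≤ 1) :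
    |∫ ω, e ω * bump α x (W ω + t) ∂μ - ∫ ω, e ω * bump α x (W ω) ∂μ| ≤
      4 * δ / α * |t| * ∫ ω, e ω ∂μ := by
  have mW := H.mW
  have mr : ∀ z (s : ℝ), Measurable (fun ω => ramp α z (W ω + s)) := fun z s =>
    (ramp_cont α z).measurable.comp (mW.add_const s)
  have br : ∀ z v, |ramp α z v| ≤ 1 := fun z v => by
    rw [abs_of_nonneg (ramp_nonneg _ _ _)]; exact ramp_le_one _ _ _
  have mb : ∀ s : ℝ, Measurable (fun ω => bump α x (W ω + s)) := fun s =>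
    (bump_cont α x).measurable.comp (mW.add_const s)
  have bb : ∀ v, |bump α x v| ≤ 1 := fun v => by
    rw [abs_of_nonneg (bump_nonneg hα _ _)]; exact bump_le_one _ _ _
  have ib : ∀ s : ℝ, Integrable (fun ω => e ω * bump α x (W ω + s)) μ := fun s =>
    mul_bdd' ie (mb s) fun ω => bb _
  have ib0 : Integrable (fun ω => e ω * bump α x (W ω)) μ := by simpa using ib 0
  have r := fun z => ramp_conc (μ := μ) H.meas hα mW hC e0 ie me (ρ := fun _ => |t|)
    (fun _ => abs_nonneg t) (fun _ => ht) measurable_const z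
  have ir : ∀ z, Integrable (fun ω => e ω * (ramp α z (W ω + |t|) - ramp α z (W ω - |t|))) μ := by
    intro z
    refine mul_bdd' ie (K := 2) ((mr z |t|).sub (mr z (-|t|))) fun ω => ?_
    have h1 := br z (W ω + |t|)
    have h2 := br z (W ω - |t|)
    rw [abs_le] at *
    constructor <;> linarith
  rw [← integral_sub (ib t) ib0]
  calc |∫ ω, e ω * bump α x (W ω + t) - e ω * bump α x (W ω) ∂μ|
      ≤ ∫ ω, |e ω * bump α x (W ω + t) - e ω * bump α x (W ω)| ∂μ := abs_integral_le_integral_abs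
    _ ≤ ∫ ω, (e ω * (ramp α (x - α) (W ω + |t|) - ramp α (x - α) (W ω - |t|)) +
          e ω * (ramp α (x + α) (W ω + |t|) - ramp α (x + α) (W ω - |t|))) ∂μ := by
        apply integral_mono ((ib t).sub ib0).abs ((ir _).fun_add (ir _))
        intro ω
        beta_reduce
        simp only [Pi.sub_apply]
        rw [← mul_sub, ← mul_add, abs_mul, abs_of_nonneg (e0 ω)]
        apply mul_le_mul_of_nonneg_left _ (e0 ω)
        have h1 := ramp_abs_sub hα (x - α) (W ω) t
        have h2 := ramp_abs_sub hα (x + α) (W ω) t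
        rw [abs_le] at *
        unfold bump
        constructor <;> linarith [h1.1, h1.2, h2.1, h2.2]
    _ ≤ 2 * δ / α * ∫ ω, e ω * |t| ∂μ + 2 * δ / α * ∫ ω, e ω * |t| ∂μ := by
        rw [integral_add (ir _) (ir _)]
        exact add_le_add (r _) (r _)
    _ = _ := by rw [integral_mul_const]; ring

lemma step_upper (H : LD μ X A B C W p κ b) {i : ι} {α : ℝ} (hα : 0 < α)
    {e : Ω → ℝ} (e0 : ∀ ω, 0 ≤ e ω) (ie : Integrable e μ)
    (me : Measurable[sig X (B i)] e) (x : ℝ) :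
    ∑ j ∈ (NN B C i)ᶜ, ∫ t, ∫ ω, (e ω * X j ω) * (bump α x (W ω + t) * ker (Yc X A j ω) t) ∂μ ∂tm ≤
      (5 / 2 * α + b) * ∫ ω, e ω ∂μ := by
  have mW := H.mW
  set I := ∫ ω, e ω ∂μ with hI
  have I0 : 0 ≤ I := integral_nonneg e0
  set N := NN B C i with hN
  have mF : Measurable (bumpF α x) := (bumpF_cont α x).measurable
  have bF : ∀ w, |bumpF α x w| ≤ 2 * α := bumpF_bound hα x
  -- facts for a single index
  have iX : ∀ j ∈ Nᶜ, Integrable (fun ω => e ω * X j ω) μ := fun j hj =>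
    (H.indC ie me (H.X_int j) (sig_X X (NNc hj (H.AB j (H.iA j))))).1
  have mE : ∀ j ∈ Nᶜ, Measurable[sig X (C i)ᶜ]
      (fun ω => |X j ω| * |SS X (A j) ω - Yc X A j ω|) := fun j hj => by
    have hs := (H.AB j).trans (NNc hj)
    exact (measurable_abs.comp (sig_X X (NNc hj (H.AB j (H.iA j))))).mul
      (measurable_abs.comp ((SS_sig X hs).sub (H.Yc_sig hs)))
  have iE : ∀ j, Integrable (fun ω => |X j ω| * |SS X (A j) ω - Yc X A j ω|) μ := fun j => by
    refine (H.bound1.1 j).mono' ?_ (Filter.Eventually.of_forall fun ω => ?_)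
    · exact ((H.meas j).abs.mul ((H.mSS _).sub (H.Yc_m j)).abs).aestronglyMeasurable
    · rw [Real.norm_eq_abs, abs_of_nonneg (by positivity)]; exact H.pw1 j ω
  have iFW : ∀ j ∈ Nᶜ, Integrable (fun ω => e ω * X j ω * bumpF α x (W ω)) μ := fun j hj =>
    mul_bdd' (iX j hj) (mF.comp mW) fun ω => bF _
  have iFY : ∀ j ∈ Nᶜ, Integrable (fun ω => e ω * X j ω * bumpF α x (SS X (A j)ᶜ ω)) μ :=
    fun j hj => mul_bdd' (iX j hj) (mF.comp (H.mSS _)) fun ω => bF _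
  have one : ∀ j ∈ Nᶜ,
      ∫ t, ∫ ω, (e ω * X j ω) * (bump α x (W ω + t) * ker (Yc X A j ω) t) ∂μ ∂tm ≤
      ∫ ω, e ω * X j ω * bumpF α x (W ω) ∂μ +
        I * ∫ ω, |X j ω| * |SS X (A j) ω - Yc X A j ω| ∂μ := by
    intro j hj
    have hs := (H.AB j).trans (NNc hj)
    let G : Ω × ℝ → ℝ := fun q => bump α x (W q.1 + q.2) * ker (Yc X A j q.1) q.2
    have mG : Measurable G :=
      ((bump_cont α x).measurable.comp ((mW.comp measurable_fst).add measurable_snd)).mul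
        (ker_meas.comp (((H.Yc_m j).comp measurable_fst).prodMk measurable_snd))
    have bG : ∀ q, |G q| ≤ 1 := fun q => by
      rw [abs_mul, abs_of_nonneg (bump_nonneg hα _ _)]
      exact mul_le_one₀ (bump_le_one _ _ _) (abs_nonneg _) (ker_abs_le _ _)
    have sw := swap_eq (iX j hj) mG bG
    have il := swap_left (iX j hj) mG bG
    rw [show (∫ t, ∫ ω, (e ω * X j ω) * (bump α x (W ω + t) * ker (Yc X A j ω) t) ∂μ ∂tm) =
      ∫ t, ∫ ω, (e ω * X j ω) * G (ω, t) ∂μ ∂tm from rfl, ← sw]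
    have ez : ∫ ω, e ω * X j ω * bumpF α x (SS X (A j)ᶜ ω) ∂μ = 0 := by
      have hB : B i ⊆ (A j)ᶜ := by
        intro l hl
        rw [Finset.mem_compl]; intro hc
        exact (Finset.mem_compl.mp (hs hc)) (H.BC i hl)
      have := H.X_ortho j (g := fun ω => e ω * bumpF α x (SS X (A j)ᶜ ω))
        ((me.mono (sig_mono X hB) le_rfl).mul (mF.comp (SS_sig X (Finset.Subset.refl _))))
      rw [← this]; congr 1; ext ω; ring
    have pE := H.indC ie me (iE j) (mE j hj)
    calc ∫ ω, e ω * X j ω * ∫ t, G (ω, t) ∂tm ∂μ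
        ≤ ∫ ω, (e ω * X j ω * bumpF α x (W ω) - e ω * X j ω * bumpF α x (SS X (A j)ᶜ ω) +
          e ω * (|X j ω| * |SS X (A j) ω - Yc X A j ω|)) ∂μ := by
          apply integral_mono il (((iFW j hj).sub (iFY j hj)).add pE.1)
          intro ω
          show e ω * X j ω * ∫ t, G (ω, t) ∂tm ≤ e ω * X j ω * bumpF α x (W ω) -
            e ω * X j ω * bumpF α x (SS X (A j)ᶜ ω) + e ω * (|X j ω| * |SS X (A j) ω - Yc X A j ω|)
          have hk : ∫ t, G (ω, t) ∂tm = bumpF α x (W ω) - bumpF α x (W ω - Yc X A j ω) :=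
            ker_bump_int (Yc X A j ω) (clamp_abs _) α x (W ω)
          rw [hk]
          have hl := bumpF_lip hα x (W ω - Yc X A j ω) (SS X (A j)ᶜ ω)
          have hw := H.W_split (A j) ω
          rw [show SS X (A j)ᶜ ω - (W ω - Yc X A j ω) = -(SS X (A j) ω - Yc X A j ω) by
            rw [hw]; ring, abs_neg] at hl
          have h3 : X j ω * (bumpF α x (SS X (A j)ᶜ ω) - bumpF α x (W ω - Yc X A j ω)) ≤
              |X j ω| * |SS X (A j) ω - Yc X A j ω| := by
            refine (le_abs_self _).trans ?_
            rw [abs_mul]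
            gcongr
          have := mul_le_mul_of_nonneg_left h3 (e0 ω)
          linarith
      _ = _ := by
          rw [integral_add ((iFW j hj).sub' (iFY j hj)) pE.1,
            integral_sub (iFW j hj) (iFY j hj), ez, pE.2, sub_zero]
  refine (Finset.sum_le_sum one).trans ?_
  rw [Finset.sum_add_distrib, ← Finset.mul_sum, ← integral_finsetSum _ iFW]
  have hb : ∑ j ∈ Nᶜ, ∫ ω, |X j ω| * |SS X (A j) ω - Yc X A j ω| ∂μ ≤ b := by
    refine le_trans ?_ H.bound1.2
    refine (Finset.sum_le_sum fun j _ => integral_mono (iE j) (H.bound1.1 j) (H.pw1 j)).trans ?_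
    refine Finset.sum_le_sum_of_subset_of_nonneg (Finset.subset_univ _) fun j _ _ =>
      integral_nonneg fun ω => ?_
    exact mul_nonneg (mul_nonneg (abs_nonneg _) (UU_nonneg _ _ _))
      (Real.rpow_nonneg (UU_nonneg _ _ _) _)
  have hS : Measurable[sig X (C i)ᶜ] (fun ω => |SS X Nᶜ ω|) := by
    refine measurable_abs.comp (SS_sig X ?_)
    intro j hj
    exact NNc hj (H.AB j (H.iA j))
  have pS := H.indC ie me (H.SS_int Nᶜ).abs hS
  have h1 : ∫ ω, ∑ j ∈ Nᶜ, e ω * X j ω * bumpF α x (W ω) ∂μ ≤ 2 * α * (I * (5 / 4)) := by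
    calc ∫ ω, ∑ j ∈ Nᶜ, e ω * X j ω * bumpF α x (W ω) ∂μ
        ≤ ∫ ω, 2 * α * (e ω * |SS X Nᶜ ω|) ∂μ := by
          apply integral_mono (integrable_finsetSum _ iFW) (pS.1.const_mul _)
          intro ω
          beta_reduce
          rw [← Finset.sum_mul, ← Finset.mul_sum]
          refine (le_abs_self _).trans ?_
          rw [abs_mul, abs_mul, abs_of_nonneg (e0 ω), mul_comm]
          exact mul_le_mul_of_nonneg_right (bF _) (mul_nonneg (e0 ω) (abs_nonneg _))
      _ = 2 * α * (I * ∫ ω, |SS X Nᶜ ω| ∂μ) := by rw [integral_const_mul, pS.2]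
      _ ≤ _ := by gcongr; exact H.SSc_abs (H.cN i)
  have := mul_le_mul_of_nonneg_left hb I0
  linarith

end LD


namespace LD
variable {Ω : Type*} [mΩ : MeasurableSpace Ω] {μ : Measure Ω} [IsProbabilityMeasure μ]
  {ι : Type*} [Fintype ι] [DecidableEq ι] {X : ι → Ω → ℝ} {A B C : ι → Finset ι}
  {W : Ω → ℝ} {p : ℝ} {κ : ℕ} {b : ℝ}

lemma XYk_int (H : LD μ X A B C W p κ b) (j : ι) :
    Integrable (fun ω => |X j ω| * |Yc X A j ω|) μ :=
  mul_bdd' (H.X_int j).abs (H.Yc_m j).abs fun ω => by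
    rw [abs_abs]; exact clamp_abs _

lemma ker_m (H : LD μ X A B C W p κ b) (j : ι) :
    Measurable (fun q : Ω × ℝ => ker (Yc X A j q.1) q.2) :=
  ker_meas.comp (((H.Yc_m j).comp measurable_fst).prodMk measurable_snd)

lemma ker_mt (H : LD μ X A B C W p κ b) (j : ι) (t : ℝ) :
    Measurable (fun ω => ker (Yc X A j ω) t) :=
  ker_meas.comp ((H.Yc_m j).prodMk measurable_const)

lemma step_t (H : LD μ X A B C W p κ b) {i : ι} {α δ : ℝ} (hα : 0 < α) (hδ : 0 ≤ δ)
    (hC : Conc μ X (B i) W α δ) {e : Ω → ℝ} (e0 : ∀ ω, 0 ≤ e ω) (ie : Integrable e μ)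
    (me : Measurable[sig X (B i)] e) (x t : ℝ) (ht : |t| ≤ 1) :
    (∑ j ∈ (NN B C i)ᶜ, ∫ ω, X j ω * ker (Yc X A j ω) t ∂μ) * (∫ ω, e ω * bump α x (W ω) ∂μ)
      - ((4 * δ / α * (∫ ω, e ω ∂μ)) *
          (∑ j ∈ (NN B C i)ᶜ, ∫ ω, (|X j ω| * |Yc X A j ω|) * |ker (Yc X A j ω) t| ∂μ)
        + (1 / 16) * (∫ ω, e ω * bump α x (W ω + t) ^ 2 ∂μ)
        + (4 * (∫ ω, e ω ∂μ) * κ) *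
          ∑ j ∈ (NN B C i)ᶜ, ∫ ω, X j ω ^ 2 * |ker (Yc X A j ω) t| ∂μ) ≤
    ∑ j ∈ (NN B C i)ᶜ, ∫ ω, (e ω * X j ω) * (bump α x (W ω + t) * ker (Yc X A j ω) t) ∂μ := by
  have mW := H.mW
  set I := ∫ ω, e ω ∂μ with hI
  have I0 : 0 ≤ I := integral_nonneg e0
  set J := (NN B C i)ᶜ with hJ
  set M := ∑ j ∈ J, ∫ ω, X j ω * ker (Yc X A j ω) t ∂μ with hM
  set P := ∫ ω, e ω * bump α x (W ω) ∂μ with hP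
  have mb : Measurable (fun ω => bump α x (W ω + t)) :=
    (bump_cont α x).measurable.comp (mW.add_const t)
  have bb : ∀ v, |bump α x v| ≤ 1 := fun v => by
    rw [abs_of_nonneg (bump_nonneg hα _ _)]; exact bump_le_one _ _ _
  have ib : Integrable (fun ω => e ω * bump α x (W ω + t)) μ := mul_bdd' ie mb fun ω => bb _
  have ib2 : Integrable (fun ω => e ω * bump α x (W ω + t) ^ 2) μ :=
    mul_bdd' ie (mb.pow_const 2) (K := 1) fun ω => by
      rw [abs_pow]; exact pow_le_one₀ (abs_nonneg _) (bb _)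
  have iX : ∀ j ∈ J, Integrable (fun ω => e ω * X j ω) μ := fun j hj =>
    (H.indC ie me (H.X_int j) (sig_X X (NNc hj (H.AB j (H.iA j))))).1
  have iT : ∀ j ∈ J, Integrable
      (fun ω => (e ω * X j ω) * (bump α x (W ω + t) * ker (Yc X A j ω) t)) μ := fun j hj =>
    mul_bdd' (iX j hj) (mb.mul (H.ker_mt j t)) (K := 1) fun ω => by
      rw [abs_mul]; exact mul_le_one₀ (bb _) (abs_nonneg _) (ker_abs_le _ _)
  obtain ⟨iV, hV⟩ := H.var_bound J t
  have mV : Measurable[sig X (C i)ᶜ] (fun ω => (∑ j ∈ J, ZZ μ X A j t ω) ^ 2) := by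
    have : Measurable[sig X (C i)ᶜ] (fun ω => ∑ j ∈ J, ZZ μ X A j t ω) :=
      @Finset.measurable_fun_sum _ _ _ _ _ _ (sig X (C i)ᶜ) _ J
        (fun j hj => H.ZZ_sig ((H.AB j).trans (NNc hj)) t)
    exact this.pow_const 2
  have pV := H.indC ie me iV mV
  -- lower bound for the sum
  have hsum : M * ∫ ω, e ω * bump α x (W ω + t) ∂μ -
      ((1 / 16) * (∫ ω, e ω * bump α x (W ω + t) ^ 2 ∂μ) +
        4 * (I * ∫ ω, (∑ j ∈ J, ZZ μ X A j t ω) ^ 2 ∂μ)) ≤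
      ∑ j ∈ J, ∫ ω, (e ω * X j ω) * (bump α x (W ω + t) * ker (Yc X A j ω) t) ∂μ := by
    rw [← integral_finsetSum _ iT, ← pV.2, ← integral_const_mul, ← integral_const_mul,
      ← integral_const_mul, ← integral_add (ib2.const_mul _) (pV.1.const_mul _),
      ← integral_sub (ib.const_mul _) ((ib2.const_mul _).fun_add (pV.1.const_mul _))]
    apply integral_mono
    · exact (ib.const_mul _).sub ((ib2.const_mul _).fun_add (pV.1.const_mul _))
    · exact integrable_finsetSum _ iT
    · intro ω
      beta_reduce
      have hz : ∑ j ∈ J, ZZ μ X A j t ω = ∑ j ∈ J, X j ω * ker (Yc X A j ω) t - M := by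
        simp only [ZZ, KK, Finset.sum_sub_distrib, hM]
      have hs : ∑ j ∈ J, (e ω * X j ω) * (bump α x (W ω + t) * ker (Yc X A j ω) t) =
          e ω * bump α x (W ω + t) * (∑ j ∈ J, ZZ μ X A j t ω + M) := by
        rw [hz, sub_add_cancel, Finset.mul_sum]
        exact Finset.sum_congr rfl fun j _ => by ring
      rw [hs]
      generalize (∑ j ∈ J, ZZ μ X A j t ω) = s
      generalize bump α x (W ω + t) = f
      have := mul_nonneg (e0 ω) (sq_nonneg (f / 4 + 2 * s))
      nlinarith
  have hsh := H.bump_shift hα hC e0 ie me x t ht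
  rw [← hP, ← hI] at hsh
  have hMt : |M| * |t| ≤
      ∑ j ∈ J, ∫ ω, (|X j ω| * |Yc X A j ω|) * |ker (Yc X A j ω) t| ∂μ := by
    calc |M| * |t| ≤ (∑ j ∈ J, ∫ ω, |X j ω * ker (Yc X A j ω) t| ∂μ) * |t| := by
          gcongr
          exact (Finset.abs_sum_le_sum_abs _ _).trans
            (Finset.sum_le_sum fun j _ => abs_integral_le_integral_abs)
      _ = ∑ j ∈ J, ∫ ω, |X j ω * ker (Yc X A j ω) t| * |t| ∂μ := by
          rw [Finset.sum_mul]
          exact Finset.sum_congr rfl fun j _ => (integral_mul_const _ _).symm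
      _ ≤ _ := by
          refine Finset.sum_le_sum fun j _ => ?_
          apply integral_mono
          · exact (H.KK_int j t).abs.mul_const _
          · exact mul_bdd' (H.XYk_int j) (H.ker_mt j t).abs (K := 1) fun ω => by
              rw [abs_abs]; exact ker_abs_le _ _
          · intro ω
            beta_reduce
            rw [abs_mul, mul_assoc, mul_assoc, mul_comm |Yc X A j ω|]
            exact mul_le_mul_of_nonneg_left (ker_supp _ _) (abs_nonneg _)
  have h1 : M * P - |M| * (4 * δ / α * |t| * I) ≤ M * ∫ ω, e ω * bump α x (W ω + t) ∂μ := by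
    have : |M * (∫ ω, e ω * bump α x (W ω + t) ∂μ - P)| ≤ |M| * (4 * δ / α * |t| * I) := by
      rw [abs_mul]; gcongr
    have := (abs_le.mp this).1
    linarith
  have h2 : |M| * (4 * δ / α * |t| * I) ≤ (4 * δ / α * I) *
      ∑ j ∈ J, ∫ ω, (|X j ω| * |Yc X A j ω|) * |ker (Yc X A j ω) t| ∂μ := by
    have := mul_le_mul_of_nonneg_left hMt (show 0 ≤ 4 * δ / α * I by positivity)
    linarith
  have h3 := mul_le_mul_of_nonneg_left hV (show 0 ≤ 4 * I by linarith)
  linarith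

lemma sub_b (H : LD μ X A B C W p κ b) (J : Finset ι) {f g : ι → Ω → ℝ}
    (hf : ∀ j, Integrable (f j) μ) (hg : ∀ j, Integrable (g j) μ) (hfg : ∀ j ω, f j ω ≤ g j ω)
    (g0 : ∀ j ω, 0 ≤ g j ω) : ∑ j ∈ J, ∫ ω, f j ω ∂μ ≤ ∑ j, ∫ ω, g j ω ∂μ :=
  (Finset.sum_le_sum fun j _ => integral_mono (hf j) (hg j) (hfg j)).trans
    (Finset.sum_le_sum_of_subset_of_nonneg (Finset.subset_univ _) fun j _ _ =>
      integral_nonneg (g0 j))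

lemma conc_step (H : LD μ X A B C W p κ b) {i : ι} {δ : ℝ} (hδ : 0 ≤ δ)
    (hC : Conc μ X (B i) W (16 * b) δ) : Conc μ X (B i) W (16 * b) (52 * b + 28 / 100 * δ) := by
  intro e e0 ie me x
  have b0 := H.b0
  have b1 := H.b1
  set α := 16 * b with hαd
  have hα : 0 < α := by positivity
  have mW := H.mW
  have up := H.step_upper hα e0 ie me x
  have lo := fun t ht => H.step_t hα hδ hC e0 ie me x t ht
  set I := ∫ ω, e ω ∂μ with hI
  have I0 : 0 ≤ I := integral_nonneg e0
  set J := (NN B C i)ᶜ with hJ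
  set P := ∫ ω, e ω * bump α x (W ω) ∂μ with hP
  have bb : ∀ v, |bump α x v| ≤ 1 := fun v => by
    rw [abs_of_nonneg (bump_nonneg hα _ _)]; exact bump_le_one _ _ _
  have mbq : Measurable (fun q : Ω × ℝ => bump α x (W q.1 + q.2)) :=
    (bump_cont α x).measurable.comp ((mW.comp measurable_fst).add measurable_snd)
  have iX : ∀ j ∈ J, Integrable (fun ω => e ω * X j ω) μ := fun j hj =>
    (H.indC ie me (H.X_int j) (sig_X X (NNc hj (H.AB j (H.iA j))))).1
  -- integrability in `t`
  have bk : ∀ j (q : Ω × ℝ), |ker (Yc X A j q.1) q.2| ≤ 1 := fun j q => ker_abs_le _ _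
  have bka : ∀ j (q : Ω × ℝ), |(|ker (Yc X A j q.1) q.2|)| ≤ 1 := fun j q => by
    rw [abs_abs]; exact ker_abs_le _ _
  have bsq : ∀ q : Ω × ℝ, |bump α x (W q.1 + q.2) ^ 2| ≤ 1 := fun q => by
    rw [abs_pow]; exact pow_le_one₀ (abs_nonneg _) (bb _)
  have bbk : ∀ j (q : Ω × ℝ), |bump α x (W q.1 + q.2) * ker (Yc X A j q.1) q.2| ≤ 1 :=
    fun j q => by
      rw [abs_mul]; exact mul_le_one₀ (bb _) (abs_nonneg _) (ker_abs_le _ _)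
  have i0 : ∀ j ∈ J, Integrable (fun t => ∫ ω, (e ω * X j ω) *
      (bump α x (W ω + t) * ker (Yc X A j ω) t) ∂μ) tm := fun j hj =>
    swap_right (iX j hj) (mbq.mul (H.ker_m j)) (bbk j)
  have i1 : ∀ j, Integrable (fun t => ∫ ω, X j ω * ker (Yc X A j ω) t ∂μ) tm := fun j =>
    swap_right (H.X_int j) (H.ker_m j) (bk j)
  have i2 : ∀ j, Integrable (fun t => ∫ ω, (|X j ω| * |Yc X A j ω|) * |ker (Yc X A j ω) t| ∂μ) tm :=
    fun j => swap_right (H.XYk_int j) (H.ker_m j).abs (bka j)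
  have i3 : Integrable (fun t => ∫ ω, e ω * bump α x (W ω + t) ^ 2 ∂μ) tm :=
    swap_right ie (mbq.pow_const 2) bsq
  have i4 : ∀ j, Integrable (fun t => ∫ ω, X j ω ^ 2 * |ker (Yc X A j ω) t| ∂μ) tm :=
    fun j => swap_right (H.X_sq j) (H.ker_m j).abs (bka j)
  -- values of the `t`-integrals
  have yc1 : ∀ j ω, |Yc X A j ω| ≤ 1 := fun j ω => clamp_abs _
  have v1 : ∀ j, ∫ t, ∫ ω, X j ω * ker (Yc X A j ω) t ∂μ ∂tm = ∫ ω, X j ω * Yc X A j ω ∂μ := by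
    intro j
    rw [← swap_eq (H.X_int j) (H.ker_m j) (bk j)]
    congr 1; ext ω; congr 1; exact ker_int_one _ (yc1 j ω)
  have v2 : ∀ j, ∫ t, ∫ ω, (|X j ω| * |Yc X A j ω|) * |ker (Yc X A j ω) t| ∂μ ∂tm =
      ∫ ω, |X j ω| * |Yc X A j ω| * |Yc X A j ω| ∂μ := by
    intro j
    rw [← swap_eq (H.XYk_int j) (H.ker_m j).abs (bka j)]
    congr 1; ext ω; congr 1; exact ker_abs_int _ (yc1 j ω)
  have v4 : ∀ j, ∫ t, ∫ ω, X j ω ^ 2 * |ker (Yc X A j ω) t| ∂μ ∂tm =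
      ∫ ω, X j ω ^ 2 * |Yc X A j ω| ∂μ := by
    intro j
    rw [← swap_eq (H.X_sq j) (H.ker_m j).abs (bka j)]
    congr 1; ext ω; congr 1; exact ker_abs_int _ (yc1 j ω)
  have v3 : ∫ t, ∫ ω, e ω * bump α x (W ω + t) ^ 2 ∂μ ∂tm ≤ 3 * α * I := by
    rw [← swap_eq ie (mbq.pow_const 2) bsq, hI, ← integral_const_mul]
    apply integral_mono (swap_left ie (mbq.pow_const 2) bsq) (ie.const_mul _)
    intro ω
    beta_reduce
    rw [mul_comm]
    exact mul_le_mul_of_nonneg_right (bump_sq_int hα x (W ω)) (e0 ω)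
  -- integrate the pointwise bound
  have int : ∫ t, ((∑ j ∈ J, ∫ ω, X j ω * ker (Yc X A j ω) t ∂μ) * P
      - ((4 * δ / α * I) *
          (∑ j ∈ J, ∫ ω, (|X j ω| * |Yc X A j ω|) * |ker (Yc X A j ω) t| ∂μ)
        + (1 / 16) * (∫ ω, e ω * bump α x (W ω + t) ^ 2 ∂μ)
        + (4 * I * κ) * ∑ j ∈ J, ∫ ω, X j ω ^ 2 * |ker (Yc X A j ω) t| ∂μ)) ∂tm ≤
      ∫ t, ∑ j ∈ J, ∫ ω, (e ω * X j ω) * (bump α x (W ω + t) * ker (Yc X A j ω) t) ∂μ ∂tm := by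
    apply setIntegral_mono_on _ _ measurableSet_Icc
    · intro t ht
      exact lo t (abs_le.mpr ht)
    · exact ((integrable_finsetSum J fun j _ => i1 j).mul_const P).sub
        (((((integrable_finsetSum J fun j _ => i2 j).const_mul _)).add (i3.const_mul _)).add
          ((integrable_finsetSum J fun j _ => i4 j).const_mul _))
    · exact integrable_finsetSum J i0
  rw [integral_finsetSum J i0] at int
  have int2 := int.trans up
  have j1 : Integrable (fun t => (∑ j ∈ J, ∫ ω, X j ω * ker (Yc X A j ω) t ∂μ) * P) tm :=
    (integrable_finsetSum J fun j _ => i1 j).mul_const P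
  have j2 : Integrable (fun t => (4 * δ / α * I) *
          (∑ j ∈ J, ∫ ω, (|X j ω| * |Yc X A j ω|) * |ker (Yc X A j ω) t| ∂μ)) tm :=
    (integrable_finsetSum J fun j _ => i2 j).const_mul _
  have j3 : Integrable (fun t => (1 / 16) * (∫ ω, e ω * bump α x (W ω + t) ^ 2 ∂μ)) tm :=
    i3.const_mul _
  have j4 : Integrable (fun t =>
      (4 * I * κ) * ∑ j ∈ J, ∫ ω, X j ω ^ 2 * |ker (Yc X A j ω) t| ∂μ) tm :=
    (integrable_finsetSum J fun j _ => i4 j).const_mul _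
  rw [integral_sub j1 ((j2.fun_add j3).fun_add j4), integral_add (j2.fun_add j3) j4,
    integral_add j2 j3, integral_mul_const, integral_const_mul, integral_const_mul,
    integral_const_mul, integral_finsetSum J fun j _ => i1 j,
    integral_finsetSum J fun j _ => i2 j, integral_finsetSum J fun j _ => i4 j] at int2
  simp_rw [v1, v2, v4] at int2
  -- bounds of the resulting sums
  have gg0 : ∀ j ω, 0 ≤ |X j ω| * UU X (C j) ω * UU X (C j) ω ^ (p - 2) := fun j ω =>
    mul_nonneg (mul_nonneg (abs_nonneg _) (UU_nonneg _ _ _)) (Real.rpow_nonneg (UU_nonneg _ _ _) _)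
  have w2 : ∑ j ∈ J, ∫ ω, |X j ω| * |Yc X A j ω| * |Yc X A j ω| ∂μ ≤ b := by
    refine (H.sub_b J (fun j => ?_) H.bound1.1 H.pw2 gg0).trans H.bound1.2
    exact mul_bdd' (H.XYk_int j) (H.Yc_m j).abs (K := 1) fun ω => by rw [abs_abs]; exact yc1 j ω
  have w4 : κ * ∑ j ∈ J, ∫ ω, X j ω ^ 2 * |Yc X A j ω| ∂μ ≤ b := by
    refine le_trans (mul_le_mul_of_nonneg_left (H.sub_b J (fun j => ?_) H.bound3.1 H.pw3 ?_)
      H.kpos.le) H.bound3.2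
    · exact mul_bdd' (H.X_sq j) (H.Yc_m j).abs (K := 1) fun ω => by rw [abs_abs]; exact yc1 j ω
    · exact fun j ω => mul_nonneg (sq_nonneg _) (Real.rpow_nonneg (UU_nonneg _ _ _) _)
  have w1 : 15 / 16 - 1 / 75 ≤ ∑ j ∈ J, ∫ ω, X j ω * Yc X A j ω ∂μ := by
    have iE : ∀ j, Integrable (fun ω => |X j ω| * |SS X (A j) ω - Yc X A j ω|) μ := fun j => by
      refine (H.bound1.1 j).mono' ?_ (Filter.Eventually.of_forall fun ω => ?_)
      · exact ((H.meas j).abs.mul ((H.mSS _).sub (H.Yc_m j)).abs).aestronglyMeasurable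
      · rw [Real.norm_eq_abs, abs_of_nonneg (by positivity)]; exact H.pw1 j ω
    have hE := (H.sub_b J iE H.bound1.1 H.pw1 gg0).trans H.bound1.2
    have hs : ∑ j ∈ NN B C i, ∫ ω, X j ω * SS X (A j) ω ∂μ +
        ∑ j ∈ J, ∫ ω, X j ω * SS X (A j) ω ∂μ = 1 := by
      rw [hJ, Finset.sum_add_sum_compl]; exact H.sum_XY
    have hs2 := H.sum_XY_small (H.cN i)
    have hs3 : ∑ j ∈ NN B C i, ∫ ω, X j ω * SS X (A j) ω ∂μ ≤ 1 / 16 := hs2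
    have iXY : ∀ j, Integrable (fun ω => X j ω * Yc X A j ω) μ := fun j =>
      mul_bdd' (H.X_int j) (H.Yc_m j) (yc1 j)
    have hj : ∑ j ∈ J, ∫ ω, X j ω * SS X (A j) ω ∂μ ≤ ∑ j ∈ J, (∫ ω, X j ω * Yc X A j ω ∂μ +
        ∫ ω, |X j ω| * |SS X (A j) ω - Yc X A j ω| ∂μ) := by
      refine Finset.sum_le_sum fun j _ => ?_
      rw [← integral_add (iXY j) (iE j)]
      apply integral_mono (H.XSS_int _ _) ((iXY j).fun_add (iE j))
      intro ω
      beta_reduce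
      rw [← abs_mul]
      have := le_abs_self (X j ω * (SS X (A j) ω - Yc X A j ω))
      linarith
    rw [Finset.sum_add_distrib] at hj
    linarith
  have hPe : ∫ ω, e ω * (Set.Icc x (x + α)).indicator 1 (W ω) ∂μ ≤ P := by
    apply integral_mono
    · exact mul_bdd' ie ((measurable_one.indicator measurableSet_Icc).comp mW) (K := 1)
        fun ω => ind_abs_le _ _
    · exact mul_bdd' ie ((bump_cont α x).measurable.comp mW) fun ω => bb _
    · intro ω
      exact mul_le_mul_of_nonneg_left (bump_ge hα x (W ω)) (e0 ω)
  have P0 : 0 ≤ P := integral_nonneg fun ω => mul_nonneg (e0 ω) (bump_nonneg hα _ _)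
  refine hPe.trans ?_
  have z1 := mul_le_mul_of_nonneg_right w1 P0
  have z2 := mul_le_mul_of_nonneg_left w2 (show 0 ≤ 4 * δ / α * I by positivity)
  have z2' : 4 * δ / α * I * b = δ / 4 * I := by rw [hαd]; field_simp; ring
  have z4 := mul_le_mul_of_nonneg_left w4 (show 0 ≤ 4 * I by positivity)
  have z5 : 0 ≤ b * I := by positivity
  have z6 : 0 ≤ δ * I := by positivity
  have z7 : (15 / 16 - 1 / 75) * P ≤ 48 * (b * I) + 1 / 4 * (δ * I) := by
    have : α * I = 16 * (b * I) := by rw [hαd]; ring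
    linarith
  nlinarith

lemma conc (H : LD μ X A B C W p κ b) (i : ι) : Conc μ X (B i) W (16 * b) (80 * b) := by
  have b0 := H.b0
  have base : Conc μ X (B i) W (16 * b) 1 := by
    intro e e0 ie me x
    rw [one_mul]
    apply integral_mono _ ie
    · intro ω
      refine mul_le_of_le_one_right (e0 ω) ?_
      exact (le_abs_self _).trans (ind_abs_le _ _)
    · exact mul_bdd' ie ((measurable_one.indicator measurableSet_Icc).comp H.mW) (K := 1)
        fun ω => ind_abs_le _ _
  have mono : ∀ {d d' : ℝ}, d ≤ d' → Conc μ X (B i) W (16 * b) d → Conc μ X (B i) W (16 * b) d' := by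
    intro d d' h hc e e0 ie me x
    exact (hc e e0 ie me x).trans (mul_le_mul_of_nonneg_right h (integral_nonneg e0))
  have ind : ∀ n : ℕ, Conc μ X (B i) W (16 * b) (73 * b + (28 / 100) ^ n) := by
    intro n
    induction n with
    | zero => exact mono (by simp; positivity) base
    | succ n ih =>
      refine mono ?_ (H.conc_step (by positivity) ih)
      rw [pow_succ]
      linarith
  obtain ⟨n, hn⟩ := exists_pow_lt_of_lt_one (show 0 < 7 * b by positivity)
    (show (28 / 100 : ℝ) < 1 by norm_num)
  exact mono (by linarith) (ind n)

end LD


/-! ### Stein method: the main estimate -/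

lemma min_pow {r u q : ℝ} (r0 : 0 ≤ r) (h : r ≤ u) (q0 : 0 < q) (q1 : q ≤ 1) :
    min 1 r ≤ u ^ q := by
  have h1 : |clamp r| ≤ u ^ q := clamp_pow (by rwa [abs_of_nonneg r0]) q0 q1
  refine le_trans (le_trans ?_ (le_abs_self _)) h1
  exact le_max_right _ _

lemma min_sq_pow {u q : ℝ} (u0 : 0 ≤ u) (q0 : 0 < q) (q1 : q ≤ 1) :
    min 1 (u ^ 2) ≤ u ^ q := by
  refine le_trans ?_ (min_pow u0 le_rfl q0 q1)
  rcases le_total u 1 with h | h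
  · rw [min_eq_right h]
    exact (min_le_right _ _).trans (by nlinarith)
  · rw [min_eq_left h]; exact min_le_left _ _

/-- bound for the oscillation of the derivative of the Stein solution -/
noncomputable def DD (α z w v r u : ℝ) : ℝ :=
  (ramp α z (w + min 1 r) - ramp α z (w - min 1 r)) + min 1 r + (2 + 2 * |v|) * min 1 r
    + 2 * min 1 (u ^ 2)

lemma DD_bound {α : ℝ} (hα : 0 < α) {z w v r u s : ℝ} (hs : |s| ≤ r) (hr : r ≤ u)
    (hw : |w| ≤ |v| + u) :
    |steinD (hz α z) (w + s) - steinD (hz α z) w| ≤ DD α z w v r u := by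
  have r0 : 0 ≤ r := (abs_nonneg s).trans hs
  have u0 : 0 ≤ u := r0.trans hr
  have g := (hz_ok α z).stein_g w s
  have e : steinD (hz α z) (w + s) - steinD (hz α z) w =
      ((w + s) * stein (hz α z) (w + s) - w * stein (hz α z) w) -
        (ramp α z (w + s) - ramp α z w) := by
    unfold steinD hz; ring
  have t1 : min 2 (|s| * (2 + 2 * |w|)) ≤ (2 + 2 * |v|) * min 1 r + 2 * min 1 (u ^ 2) := by
    have hm : 0 ≤ min 1 r := le_min zero_le_one r0
    rcases le_total 1 u with h | h
    · rw [min_eq_left (show 1 ≤ u ^ 2 by nlinarith)]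
      have : 0 ≤ (2 + 2 * |v|) * min 1 r := by positivity
      exact (min_le_left _ _).trans (by linarith)
    · rw [min_eq_right (show u ^ 2 ≤ 1 by nlinarith), min_eq_right (hr.trans h)]
      refine (min_le_right _ _).trans ?_
      have h1 : |s| * (2 + 2 * |w|) ≤ r * (2 + 2 * (|v| + u)) := by gcongr
      nlinarith
  have t2 : |ramp α z (w + s) - ramp α z w| ≤
      (ramp α z (w + min 1 r) - ramp α z (w - min 1 r)) + min 1 r := by
    rcases le_total 1 r with h | h
    · rw [min_eq_left h]
      have m := ramp_mono hα z (w := w - 1) (w' := w + 1) (by linarith)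
      have : |ramp α z (w + s) - ramp α z w| ≤ 1 := by
        rw [abs_le]
        constructor <;> linarith [ramp_nonneg α z (w + s), ramp_nonneg α z w,
          ramp_le_one α z (w + s), ramp_le_one α z w]
      linarith
    · rw [min_eq_right h]
      have a := ramp_abs_sub hα z w s
      have m1 := ramp_mono hα z (w := w + |s|) (w' := w + r) (by linarith)
      have m2 := ramp_mono hα z (w := w - r) (w' := w - |s|) (by linarith)
      linarith
  rw [e]
  refine (abs_sub _ _).trans ?_
  unfold DD
  linarith

namespace LD
variable {Ω : Type*} [mΩ : MeasurableSpace Ω] {μ : Measure Ω} [IsProbabilityMeasure μ]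
  {ι : Type*} [Fintype ι] [DecidableEq ι] {X : ι → Ω → ℝ} {A B C : ι → Finset ι}
  {W : Ω → ℝ} {p : ℝ} {κ : ℕ} {b : ℝ}

lemma G_D (H : LD μ X A B C W p κ b) (j : ι) (z : ℝ) {G : Ω → ℝ} (G0 : ∀ ω, 0 ≤ G ω)
    (iG : Integrable G μ) (mG : Measurable[sig X (B j)] G)
    (iGU : Integrable (fun ω => G ω * UU X (C j) ω ^ (p - 2)) μ) :
    Integrable (fun ω => G ω * DD (16 * b) z (W ω) (SS X (C j)ᶜ ω) (UU X (B j) ω) (UU X (C j) ω)) μ ∧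
    ∫ ω, G ω * DD (16 * b) z (W ω) (SS X (C j)ᶜ ω) (UU X (B j) ω) (UU X (C j) ω) ∂μ ≤
      35 / 2 * ∫ ω, G ω * UU X (C j) ω ^ (p - 2) ∂μ := by
  have hp := H.hp1
  have hp2 := H.hp2
  have b0 := H.b0
  have mW := H.mW
  set α := 16 * b with hαd
  have hα : 0 < α := by positivity
  let ρ : Ω → ℝ := fun ω => min 1 (UU X (B j) ω)
  have ρ0 : ∀ ω, 0 ≤ ρ ω := fun ω => le_min zero_le_one (UU_nonneg _ _ _)
  have ρ1 : ∀ ω, ρ ω ≤ 1 := fun ω => min_le_left _ _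
  have mρ : Measurable[sig X (B j)] ρ :=
    (measurable_const.min measurable_id : Measurable (fun x : ℝ => min 1 x)).comp
      (UU_sig X (Finset.Subset.refl _))
  have mρ' : Measurable ρ := mρ.mono (sig_le H.meas _) le_rfl
  have iGρ : Integrable (fun ω => G ω * ρ ω) μ :=
    mul_bdd' iG mρ' (K := 1) fun ω => by rw [abs_of_nonneg (ρ0 ω)]; exact ρ1 ω
  have hρU : ∀ ω, ρ ω ≤ UU X (C j) ω ^ (p - 2) := fun ω =>
    min_pow (UU_nonneg _ _ _) (UU_mono X (H.BC j) ω) (by linarith) (by linarith)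
  have c1 := ramp_conc (μ := μ) H.meas hα mW (H.conc j) G0 iG mG ρ0 ρ1 mρ z
  have iR : Integrable (fun ω => G ω * (ramp α z (W ω + ρ ω) - ramp α z (W ω - ρ ω))) μ := by
    refine mul_bdd' iG (K := 1) ?_ ?_
    · exact ((ramp_cont α z).measurable.comp (mW.add mρ')).sub
        ((ramp_cont α z).measurable.comp (mW.sub mρ'))
    · intro ω; rw [abs_le]
      constructor <;> linarith [ramp_nonneg α z (W ω + ρ ω), ramp_nonneg α z (W ω - ρ ω),
        ramp_le_one α z (W ω + ρ ω), ramp_le_one α z (W ω - ρ ω)]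
  obtain ⟨iV, hV⟩ := H.indC (i := j) iGρ (mG.mul mρ) (H.SS_int (C j)ᶜ).abs
    (measurable_abs.comp (SS_sig X (Finset.Subset.refl _)))
  have iq : Integrable (fun ω => G ω * min 1 (UU X (C j) ω ^ 2)) μ := by
    refine mul_bdd' iG (K := 1) (measurable_const.min ((H.mUU _).pow_const 2)) fun ω => ?_
    rw [abs_of_nonneg (le_min zero_le_one (sq_nonneg _))]; exact min_le_left _ _
  have e : (fun ω => G ω * DD α z (W ω) (SS X (C j)ᶜ ω) (UU X (B j) ω) (UU X (C j) ω)) =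
      fun ω => ((G ω * (ramp α z (W ω + ρ ω) - ramp α z (W ω - ρ ω)) + 3 * (G ω * ρ ω)) +
        2 * (G ω * ρ ω * |SS X (C j)ᶜ ω|)) + 2 * (G ω * min 1 (UU X (C j) ω ^ 2)) := by
    ext ω
    simp only [DD, ρ]; ring
  rw [e]
  have k1 := iR.fun_add (iGρ.const_mul 3)
  have k2 := k1.fun_add (iV.const_mul 2)
  refine ⟨k2.fun_add (iq.const_mul 2), ?_⟩
  rw [integral_add k2 (iq.const_mul 2), integral_add k1 (iV.const_mul 2),
    integral_add iR (iGρ.const_mul 3), integral_const_mul, integral_const_mul, integral_const_mul,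
    hV]
  have m1 : ∫ ω, G ω * ρ ω ∂μ ≤ ∫ ω, G ω * UU X (C j) ω ^ (p - 2) ∂μ :=
    integral_mono iGρ iGU fun ω => mul_le_mul_of_nonneg_left (hρU ω) (G0 ω)
  have m2 : ∫ ω, G ω * min 1 (UU X (C j) ω ^ 2) ∂μ ≤ ∫ ω, G ω * UU X (C j) ω ^ (p - 2) ∂μ :=
    integral_mono iq iGU fun ω => mul_le_mul_of_nonneg_left
      (min_sq_pow (UU_nonneg _ _ _) (by linarith) (by linarith)) (G0 ω)
  have n0 : 0 ≤ ∫ ω, G ω * ρ ω ∂μ := integral_nonneg fun ω => mul_nonneg (G0 ω) (ρ0 ω)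
  have m3 := mul_le_mul_of_nonneg_left (H.SSc_abs (H.cC j)) n0
  have e10 : 2 * (80 * b) / α = 10 := by rw [hαd]; field_simp; norm_num
  rw [e10] at c1
  linarith

lemma one_j (H : LD μ X A B C W p κ b) (j : ι) (z : ℝ) :
    |∫ ω, X j ω * stein (hz (16 * b) z) (W ω) ∂μ -
      (∫ ω, X j ω * SS X (A j) ω ∂μ) * ∫ ω, steinD (hz (16 * b) z) (W ω) ∂μ| ≤
    35 * (∫ ω, |X j ω| * UU X (C j) ω * UU X (C j) ω ^ (p - 2) ∂μ) +
    35 / 2 * ((∫ ω, |X j ω| * UU X (C j) ω ∂μ) * ∫ ω, UU X (C j) ω ^ (p - 2) ∂μ) := by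
  have b0 := H.b0
  have mW := H.mW
  have hα : 0 < 16 * b := by positivity
  have ok := hz_ok (16 * b) z
  set h := hz (16 * b) z with hh
  set D : Ω → ℝ := fun ω =>
    DD (16 * b) z (W ω) (SS X (C j)ᶜ ω) (UU X (B j) ω) (UU X (C j) ω) with hD
  have UC0 := UU_nonneg X (C j)
  have mf : Measurable (stein h) := ok.stein_cont.measurable
  have mfD : Measurable (steinD h) := ok.steinD_cont.measurable
  have bf : ∀ w, |stein h w| ≤ 2 := fun w => (ok.stein_both w).1
  have bfD : ∀ w, |steinD h w| ≤ 2 := ok.steinD_abs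
  -- the two weights
  let G : Ω → ℝ := fun ω => |X j ω * SS X (A j) ω|
  have iXY := H.XSS_int j (A j)
  have iG : Integrable G μ := iXY.abs
  have mG : Measurable[sig X (B j)] G :=
    measurable_abs.comp ((sig_X X (H.AB j (H.iA j))).mul (SS_sig X (H.AB j)))
  have mG' : Measurable G := mG.mono (sig_le H.meas _) le_rfl
  have G0 : ∀ ω, 0 ≤ G ω := fun ω => abs_nonneg _
  have GU : ∀ ω, G ω ≤ |X j ω| * UU X (C j) ω := fun ω => by
    simp only [G, abs_mul]; exact mul_le_mul_of_nonneg_left (H.Y_le j ω) (abs_nonneg _)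
  have GUU : ∀ ω, G ω * UU X (C j) ω ^ (p - 2) ≤
      |X j ω| * UU X (C j) ω * UU X (C j) ω ^ (p - 2) := fun ω =>
    mul_le_mul_of_nonneg_right (GU ω) (Real.rpow_nonneg (UC0 ω) _)
  have iGU : Integrable (fun ω => G ω * UU X (C j) ω ^ (p - 2)) μ := by
    refine (H.bound1.1 j).mono' ?_ (Filter.Eventually.of_forall fun ω => ?_)
    · exact (mG'.mul ((H.mUU _).pow_const _)).aestronglyMeasurable
    · rw [Real.norm_eq_abs, abs_of_nonneg (mul_nonneg (G0 ω) (Real.rpow_nonneg (UC0 ω) _))]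
      exact GUU ω
  obtain ⟨iGD, hGD⟩ := H.G_D j z G0 iG mG iGU
  obtain ⟨iD, hDD⟩ := H.G_D j z (G := fun _ => 1) (fun _ => zero_le_one) (integrable_const _)
    measurable_const (by simpa using H.bound2.2.1 j)
  simp only [one_mul] at iD hDD
  change Integrable D μ at iD
  change ∫ ω, D ω ∂μ ≤ _ at hDD
  change Integrable (fun ω => G ω * D ω) μ at iGD
  change ∫ ω, G ω * D ω ∂μ ≤ _ at hGD
  -- oscillation
  have osc : ∀ ω s, |s| ≤ UU X (B j) ω → |steinD h (W ω + s) - steinD h (W ω)| ≤ D ω := by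
    intro ω s hs
    refine DD_bound hα hs (UU_mono X (H.BC j) ω) ?_
    rw [H.W_split (C j) ω]
    refine (abs_add_le _ _).trans ?_
    linarith [SS_le_UU X (C j) ω]
  -- first replacement
  have i1 : Integrable (fun ω => X j ω * stein h (W ω)) μ :=
    mul_bdd' (H.X_int j) (mf.comp mW) fun ω => bf _
  have i2 : Integrable (fun ω => X j ω * stein h (SS X (A j)ᶜ ω)) μ :=
    mul_bdd' (H.X_int j) (mf.comp (H.mSS _)) fun ω => bf _
  have z2 : ∫ ω, X j ω * stein h (SS X (A j)ᶜ ω) ∂μ = 0 :=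
    H.X_ortho j (mf.comp (SS_sig X (Finset.Subset.refl _)))
  have i3 : Integrable (fun ω => X j ω * SS X (A j) ω * steinD h (SS X (B j)ᶜ ω)) μ :=
    mul_bdd' iXY (mfD.comp (H.mSS _)) fun ω => bfD _
  have z3 : ∫ ω, X j ω * SS X (A j) ω * steinD h (SS X (B j)ᶜ ω) ∂μ =
      (∫ ω, X j ω * SS X (A j) ω ∂μ) * ∫ ω, steinD h (SS X (B j)ᶜ ω) ∂μ := by
    have hi : IndepFun (fun ω => X j ω * SS X (A j) ω) (fun ω => steinD h (SS X (B j)ᶜ ω)) μ :=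
      indepFun_of (H.ind2 j) ((sig_X X (H.iA j)).mul (SS_sig X (Finset.Subset.refl _)))
        (mfD.comp (SS_sig X (Finset.Subset.refl _)))
    exact hi.integral_fun_mul_eq_mul_integral iXY.1 (mfD.comp (H.mSS _)).aestronglyMeasurable
  have oscB : ∀ ω, |steinD h (SS X (B j)ᶜ ω) - steinD h (W ω)| ≤ D ω := by
    intro ω
    have := osc ω (-SS X (B j) ω) (by rw [abs_neg]; exact SS_le_UU X _ ω)
    rwa [show W ω + -SS X (B j) ω = SS X (B j)ᶜ ω by rw [H.W_split (B j) ω]; ring] at this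
  have s1 : |∫ ω, X j ω * stein h (W ω) ∂μ -
      (∫ ω, X j ω * SS X (A j) ω ∂μ) * ∫ ω, steinD h (SS X (B j)ᶜ ω) ∂μ| ≤
      2 * ∫ ω, G ω * D ω ∂μ := by
    have e : ∫ ω, X j ω * stein h (W ω) ∂μ -
      (∫ ω, X j ω * SS X (A j) ω ∂μ) * ∫ ω, steinD h (SS X (B j)ᶜ ω) ∂μ =
      ∫ ω, (X j ω * stein h (W ω) - X j ω * stein h (SS X (A j)ᶜ ω) -
        X j ω * SS X (A j) ω * steinD h (SS X (B j)ᶜ ω)) ∂μ := by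
      rw [integral_sub (i1.sub' i2) i3, integral_sub i1 i2, z2, z3, sub_zero]
    rw [e, ← integral_const_mul]
    refine abs_integral_le_integral_abs.trans ?_
    apply integral_mono ((i1.sub' i2).sub' i3).abs (iGD.const_mul _)
    intro ω
    show |X j ω * stein h (W ω) - X j ω * stein h (SS X (A j)ᶜ ω) -
        X j ω * SS X (A j) ω * steinD h (SS X (B j)ᶜ ω)| ≤ 2 * (G ω * D ω)
    have tay := ok.stein_taylor (W ω) (SS X (A j) ω) (D ω) (UU X (B j) ω)
      ((SS_le_UU X _ ω).trans (UU_mono X (H.AB j) ω)) (osc ω)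
    rw [show W ω - SS X (A j) ω = SS X (A j)ᶜ ω by rw [H.W_split (A j) ω]; ring] at tay
    have e2 : X j ω * stein h (W ω) - X j ω * stein h (SS X (A j)ᶜ ω) -
        X j ω * SS X (A j) ω * steinD h (SS X (B j)ᶜ ω) =
        X j ω * (stein h (W ω) - stein h (SS X (A j)ᶜ ω) - SS X (A j) ω * steinD h (W ω)) -
        (X j ω * SS X (A j) ω) * (steinD h (SS X (B j)ᶜ ω) - steinD h (W ω)) := by ring
    rw [e2]
    refine (abs_sub _ _).trans ?_
    rw [abs_mul, abs_mul (X j ω * SS X (A j) ω)]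
    have q1 : |X j ω| * |stein h (W ω) - stein h (SS X (A j)ᶜ ω) - SS X (A j) ω * steinD h (W ω)|
        ≤ G ω * D ω := by
      refine (mul_le_mul_of_nonneg_left tay (abs_nonneg _)).trans (le_of_eq ?_)
      simp only [G, abs_mul]; ring
    have q2 := mul_le_mul_of_nonneg_left (oscB ω) (abs_nonneg (X j ω * SS X (A j) ω))
    change _ ≤ G ω * D ω at q2
    linarith
  have s2 : |∫ ω, steinD h (SS X (B j)ᶜ ω) ∂μ - ∫ ω, steinD h (W ω) ∂μ| ≤ ∫ ω, D ω ∂μ := by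
    have j1 : Integrable (fun ω => steinD h (SS X (B j)ᶜ ω)) μ := by
      simpa using mul_bdd' (integrable_const (1 : ℝ)) (mfD.comp (H.mSS (B j)ᶜ)) fun ω => bfD _
    have j2 : Integrable (fun ω => steinD h (W ω)) μ := by
      simpa using mul_bdd' (μ := μ) (integrable_const (1 : ℝ)) (mfD.comp mW) fun ω => bfD _
    rw [← integral_sub j1 j2]
    refine abs_integral_le_integral_abs.trans ?_
    exact integral_mono (j1.sub' j2).abs iD oscB
  have s3 : |∫ ω, X j ω * SS X (A j) ω ∂μ| ≤ ∫ ω, |X j ω| * UU X (C j) ω ∂μ :=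
    abs_integral_le_integral_abs.trans (integral_mono iG (H.bound2.1 j) GU)
  have s4 : ∫ ω, G ω * UU X (C j) ω ^ (p - 2) ∂μ ≤
      ∫ ω, |X j ω| * UU X (C j) ω * UU X (C j) ω ^ (p - 2) ∂μ :=
    integral_mono iGU (H.bound1.1 j) GUU
  have n1 : 0 ≤ ∫ ω, |X j ω| * UU X (C j) ω ∂μ :=
    integral_nonneg fun ω => mul_nonneg (abs_nonneg _) (UC0 ω)
  have s5 : |(∫ ω, X j ω * SS X (A j) ω ∂μ) *
      (∫ ω, steinD h (SS X (B j)ᶜ ω) ∂μ - ∫ ω, steinD h (W ω) ∂μ)| ≤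
      (∫ ω, |X j ω| * UU X (C j) ω ∂μ) * (35 / 2 * ∫ ω, UU X (C j) ω ^ (p - 2) ∂μ) := by
    rw [abs_mul]
    exact mul_le_mul s3 (s2.trans hDD) (abs_nonneg _) n1
  rw [abs_le] at s1 s5 ⊢
  constructor <;> nlinarith [s1.1, s1.2, s5.1, s5.2]

lemma main (H : LD μ X A B C W p κ b) (z : ℝ) :
    |∫ ω, hz (16 * b) z (W ω) ∂μ - gmean (hz (16 * b) z)| ≤ 105 / 2 * b := by
  have mW := H.mW
  have ok := hz_ok (16 * b) z
  have one := fun j => H.one_j j z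
  set h := hz (16 * b) z with hh
  have mf : Measurable (stein h) := ok.stein_cont.measurable
  have mfD : Measurable (steinD h) := ok.steinD_cont.measurable
  have bf : ∀ w, |stein h w| ≤ 2 := fun w => (ok.stein_both w).1
  have bfD : ∀ w, |steinD h w| ≤ 2 := ok.steinD_abs
  have iD : Integrable (fun ω => steinD h (W ω)) μ := by
    simpa using mul_bdd' (μ := μ) (integrable_const (1 : ℝ)) (mfD.comp mW) fun ω => bfD _
  have iW : Integrable W μ := by rw [H.hW]; exact H.SS_int _
  have iWf : Integrable (fun ω => W ω * stein h (W ω)) μ :=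
    mul_bdd' iW (mf.comp mW) fun ω => bf _
  have iX : ∀ j, Integrable (fun ω => X j ω * stein h (W ω)) μ := fun j =>
    mul_bdd' (H.X_int j) (mf.comp mW) fun ω => bf _
  have e1 : ∫ ω, h (W ω) ∂μ - gmean h = ∫ ω, steinD h (W ω) ∂μ - ∫ ω, W ω * stein h (W ω) ∂μ := by
    rw [← integral_sub iD iWf]
    have : ∀ ω, steinD h (W ω) - W ω * stein h (W ω) = h (W ω) - gmean h := fun ω => by
      unfold steinD; ring
    simp_rw [this]
    have ih : Integrable (fun ω => h (W ω)) μ := by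
      simpa using mul_bdd' (μ := μ) (K := 1) (integrable_const (1 : ℝ)) (ok.cont.measurable.comp mW)
        fun ω => by
          simp only [Function.comp]
          rw [abs_of_nonneg (ok.nn _)]; exact ok.le1 _
    rw [integral_sub ih (integrable_const _)]; simp
  have e2 : ∫ ω, W ω * stein h (W ω) ∂μ = ∑ j, ∫ ω, X j ω * stein h (W ω) ∂μ := by
    rw [← integral_finsetSum _ fun j _ => iX j]
    congr 1; ext ω
    rw [← Finset.sum_mul]
    congr 1
    exact congrFun H.hW ω
  have e3 : ∫ ω, steinD h (W ω) ∂μ =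
      ∑ j, (∫ ω, X j ω * SS X (A j) ω ∂μ) * ∫ ω, steinD h (W ω) ∂μ := by
    rw [← Finset.sum_mul, H.sum_XY, one_mul]
  rw [e1, e2, e3, abs_sub_comm, ← Finset.sum_sub_distrib]
  refine (Finset.abs_sum_le_sum_abs _ _).trans ((Finset.sum_le_sum fun j _ => one j).trans ?_)
  rw [Finset.sum_add_distrib, ← Finset.mul_sum, ← Finset.mul_sum]
  linarith [H.bound1.2, H.bound2.2.2]

lemma kolm (H : LD μ X A B C W p κ b) (z : ℝ) :
    |(μ {ω | W ω ≤ z}).toReal - stdGaussianCDF z| ≤ 75 * b := by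
  have b0 := H.b0
  have mW := H.mW
  set α := 16 * b with hα'
  have hα : 0 < α := by positivity
  have ih : ∀ y, Integrable (fun ω => hz α y (W ω)) μ := fun y => by
    have ok := hz_ok α y
    simpa using mul_bdd' (μ := μ) (K := 1) (integrable_const (1 : ℝ)) (ok.cont.measurable.comp mW)
      fun ω => by
        simp only [Function.comp]
        rw [abs_of_nonneg (ok.nn _)]; exact ok.le1 _
  have hs : MeasurableSet {ω | W ω ≤ z} := measurableSet_le mW measurable_const
  have e : (μ {ω | W ω ≤ z}).toReal = ∫ ω, {ω | W ω ≤ z}.indicator (1 : Ω → ℝ) ω ∂μ := by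
    rw [integral_indicator_one hs]; rfl
  have ii : Integrable (fun ω => {ω | W ω ≤ z}.indicator (1 : Ω → ℝ) ω) μ :=
    (integrable_const (1 : ℝ)).indicator hs
  have u1 : (μ {ω | W ω ≤ z}).toReal ≤ ∫ ω, hz α z (W ω) ∂μ := by
    rw [e]
    apply integral_mono ii (ih z)
    intro ω
    beta_reduce
    by_cases hw : W ω ≤ z
    · rw [Set.indicator_of_mem (by exact hw), hz, ramp_zero hα hw]; simp
    · rw [Set.indicator_of_notMem (by exact hw)]; exact (hz_ok α z).nn _
  have u2 : ∫ ω, hz α (z - α) (W ω) ∂μ ≤ (μ {ω | W ω ≤ z}).toReal := by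
    rw [e]
    apply integral_mono (ih _) ii
    intro ω
    beta_reduce
    by_cases hw : W ω ≤ z
    · rw [Set.indicator_of_mem (by exact hw)]; exact (hz_ok α _).le1 _
    · rw [Set.indicator_of_notMem (by exact hw), hz, ramp_one hα (by linarith)]; simp
  have m1 := abs_le.mp (H.main z)
  have m2 := abs_le.mp (H.main (z - α))
  rw [← hα'] at m1 m2
  have g1 := gmean_le_cdf hα z
  have g2 := cdf_le_gmean hα (z - α)
  have l1 := cdf_lip z α hα
  have l2 := cdf_lip (z - α) α hα
  rw [sub_add_cancel] at l2
  rw [abs_le]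
  constructor <;> linarith [m1.1, m1.2, m2.1, m2.2]

end LD

theorem stmt_3
    {Ω : Type*} [MeasurableSpace Ω] {μ : Measure Ω} [IsProbabilityMeasure μ]
    {ι : Type*} [Fintype ι] [DecidableEq ι]
    (p : ℝ) (hp : 2 < p ∧ p ≤ 3)
    (X : ι → Ω → ℝ) (A B C : ι → Finset ι)
    (hXmeas : ∀ i, Measurable (X i))
    (hXmean : ∀ i, ∫ ω, X i ω ∂μ = 0)
    (hXp : ∀ i, Integrable (fun ω => |X i ω| ^ p) μ)
    (hiA : ∀ i, i ∈ A i) (hAB : ∀ i, A i ⊆ B i) (hBC : ∀ i, B i ⊆ C i)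
    (hLD1 : ∀ i, IndepFun (X i) (fun ω => fun j : ((A i)ᶜ : Finset ι) => X j.1 ω) μ)
    (hLD2 : ∀ i, IndepFun (fun ω => fun j : (A i : Finset ι) => X j.1 ω)
      (fun ω => fun j : ((B i)ᶜ : Finset ι) => X j.1 ω) μ)
    (hLD3 : ∀ i, IndepFun (fun ω => fun j : (B i : Finset ι) => X j.1 ω)
      (fun ω => fun j : ((C i)ᶜ : Finset ι) => X j.1 ω) μ)
    (W : Ω → ℝ) (hW : ∀ ω, W ω = ∑ i, X i ω)
    (hWvar : ∫ ω, (W ω) ^ 2 ∂μ = 1)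
    (κ : ℕ)
    (hκ : ∀ i, max (Finset.univ.filter fun j => (C i ∩ B j).Nonempty).card
      (Finset.univ.filter fun j => i ∈ C j).card ≤ κ) :
    ∀ z : ℝ, |(μ {ω | W ω ≤ z}).toReal - stdGaussianCDF z| ≤
      75 * (κ : ℝ) ^ (p - 1) * ∑ i, ∫ ω, |X i ω| ^ p ∂μ := by
  intro z
  have hne : Nonempty ι := by
    by_contra h
    rw [not_nonempty_iff] at h
    have : ∀ ω, W ω = 0 := fun ω => by rw [hW]; simp
    simp [this] at hWvar
  obtain ⟨i0⟩ := hne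
  have κpos : 1 ≤ κ := by
    refine le_trans ?_ ((le_max_right _ _).trans (hκ i0))
    exact Finset.card_pos.mpr ⟨i0, by simpa using hBC _ (hAB _ (hiA i0))⟩
  set β : ℝ := (κ : ℝ) ^ (p - 1) * ∑ i, ∫ ω, |X i ω| ^ p ∂μ with hβ
  have β0 : 0 ≤ β := mul_nonneg (by positivity)
    (Finset.sum_nonneg fun i _ => integral_nonneg fun ω => by positivity)
  rw [mul_assoc, ← hβ]
  have key : ∀ b, β < b → |(μ {ω | W ω ≤ z}).toReal - stdGaussianCDF z| ≤ 75 * b := by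
    intro b hb
    rcases le_or_gt b (1 / 75) with h | h
    · have H : LD μ X A B C W p κ b :=
        { hp1 := hp.1, hp2 := hp.2, meas := hXmeas, mean := hXmean, Lp := hXp,
          iA := hiA, AB := hAB, BC := hBC,
          ind1 := fun i => (IndepFun_iff_Indep _ _ _).mp (hLD1 i)
          ind2 := fun i => (IndepFun_iff_Indep _ _ _).mp (hLD2 i)
          ind3 := fun i => (IndepFun_iff_Indep _ _ _).mp (hLD3 i)
          hW := by funext ω; simp [hW, SS]
          var := hWvar, κpos := κpos
          cN := fun i => (le_max_left _ _).trans (hκ i)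
          cR := fun i => (le_max_right _ _).trans (hκ i)
          hb := hb.le, b0 := β0.trans_lt hb, b1 := h }
      exact H.kolm z
    · have f0 : 0 ≤ (μ {ω | W ω ≤ z}).toReal := ENNReal.toReal_nonneg
      have f1 : (μ {ω | W ω ≤ z}).toReal ≤ 1 :=
        ENNReal.toReal_le_of_le_ofReal zero_le_one (by simpa using prob_le_one)
      have g0 : 0 ≤ stdGaussianCDF z := integral_nonneg fun x => by positivity
      have g1 : stdGaussianCDF z ≤ 1 :=
        (cdf_le_gmean zero_lt_one z).trans (hz_ok 1 z).mean_le
      rw [abs_le]; constructor <;> linarith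
  refine le_of_forall_pos_le_add fun ε hε => ?_
  have := key (β + ε / 75) (by linarith [div_pos hε (by norm_num : (0:ℝ) < 75)])
  linarith
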